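/- arXiv:0707.0939 — 2 statements merged into one kernel-verified Lean document; each statement's English description precedes it below -/
import Mathlib

section
/- For a 4n-dimensional HKT-manifold with torsion three-form T = I dω_I = J dω_J = K dω_K, the exterior derivatives of the Kähler forms satisfy t = −Λ_I dω_I = KΛ_J dω_I = −JΛ_K dω_I (and cyclically), where t = I d*ω_I = J d*ω_J = K d*ω_K is the common Lee form. Furthermore Iλ_I = Jλ_J = Kλ_K = (1/2n) t, θ^ξ = θ^ξ_I = θ^ξ_J = θ^ξ_K, and the one-form parts of the β_A satisfy ν^I_4 = ν^J_4 = ν^K_4 = 2t and, when n > 1, ν^I_3 = ν^J_3 = ν^K_3 = 32 θ^ξ = (4/(2n+1)) t. -/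
/-!  Synthetic (Koszul-style) model of an almost quaternion-Hermitian `4n`-manifold.

`C` plays the role of the commutative ℝ-algebra of smooth functions and `V` that of
the `C`-module of vector fields, equipped with a directional derivative `D`, a Lie
bracket, a Riemannian metric `g` together with its Levi-Civita connection `nab`
(characterised by being torsion-free and metric), a local adapted basis `I, J, K`
of anticommuting almost complex structures with `K = I J`, each compatible with the
metric, and a (local) orthonormal frame.  -/

noncomputable section

open scoped BigOperators

structure AQH (n : ℕ) (C : Type*) (V : Type*) [CommRing C] [Algebra ℝ C]
    [AddCommGroup V] [Module C V] where
  /-- derivative of a function along a vector field -/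
  D : V → C → C
  D_add : ∀ X f g, D X (f + g) = D X f + D X g
  D_mul : ∀ X f g, D X (f * g) = f * D X g + g * D X f
  D_const : ∀ X (r : ℝ), D X (algebraMap ℝ C r) = 0
  D_addX : ∀ X Y f, D (X + Y) f = D X f + D Y f
  D_smulX : ∀ (f : C) (X : V) (h : C), D (f • X) h = f * D X h
  /-- the Lie bracket of vector fields -/
  bracket : V → V → V
  bracket_skew : ∀ X Y, bracket X Y = -bracket Y X
  bracket_add : ∀ X Y Z, bracket X (Y + Z) = bracket X Y + bracket X Z
  bracket_smul : ∀ X (f : C) Y, bracket X (f • Y) = f • bracket X Y + (D X f) • Y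
  bracket_jacobi : ∀ X Y Z,
    bracket X (bracket Y Z) + bracket Y (bracket Z X) + bracket Z (bracket X Y) = 0
  D_bracket : ∀ X Y f, D (bracket X Y) f = D X (D Y f) - D Y (D X f)
  /-- the Riemannian metric -/
  g : V → V → C
  g_symm : ∀ X Y, g X Y = g Y X
  g_add : ∀ X Y Z, g (X + Y) Z = g X Z + g Y Z
  g_smul : ∀ (f : C) X Y, g (f • X) Y = f * g X Y
  /-- the Levi-Civita connection -/
  nab : V → V → V
  nab_addX : ∀ X Y Z, nab (X + Y) Z = nab X Z + nab Y Z
  nab_smulX : ∀ (f : C) X Y, nab (f • X) Y = f • nab X Y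
  nab_add : ∀ X Y Z, nab X (Y + Z) = nab X Y + nab X Z
  nab_leibniz : ∀ X (f : C) Y, nab X (f • Y) = f • nab X Y + (D X f) • Y
  torsion_free : ∀ X Y, nab X Y - nab Y X = bracket X Y
  nab_metric : ∀ X Y Z, D X (g Y Z) = g (nab X Y) Z + g Y (nab X Z)
  /-- the (local) adapted basis of almost complex structures -/
  I : V → V
  J : V → V
  K : V → V
  I_lin : ∀ (f : C) X Y, I (f • X + Y) = f • I X + I Y
  J_lin : ∀ (f : C) X Y, J (f • X + Y) = f • J X + J Y
  K_lin : ∀ (f : C) X Y, K (f • X + Y) = f • K X + K Y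
  I_sq : ∀ X, I (I X) = -X
  J_sq : ∀ X, J (J X) = -X
  K_def : ∀ X, K X = I (J X)
  anticomm : ∀ X, I (J X) = -J (I X)
  I_metric : ∀ X Y, g (I X) (I Y) = g X Y
  J_metric : ∀ X Y, g (J X) (J Y) = g X Y
  /-- a (local) orthonormal frame -/
  frame : Fin (4 * n) → V
  frame_orthonormal : ∀ i j, g (frame i) (frame j) = if i = j then 1 else 0
  frame_span : ∀ X, X = ∑ i, g X (frame i) • frame i

namespace AQH

section ops

variable {C V : Type*} [CommRing C]

/-- the operator `A_(1)` on covariant 3-tensors -/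
def op1 (A : V → V) (ψ : V → V → V → C) : V → V → V → C := fun X Y Z => -ψ (A X) Y Z

/-- the operator `A_(2)` on covariant 3-tensors -/
def op2 (A : V → V) (ψ : V → V → V → C) : V → V → V → C := fun X Y Z => -ψ X (A Y) Z

/-- the operator `A_(3)` on covariant 3-tensors -/
def op3 (A : V → V) (ψ : V → V → V → C) : V → V → V → C := fun X Y Z => -ψ X Y (A Z)

/-- the operator `A_(12) = A_(1) A_(2)` on covariant 3-tensors -/
def op12 (A : V → V) (ψ : V → V → V → C) : V → V → V → C := fun X Y Z => ψ (A X) (A Y) Z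

/-- the operator `A_(13) = A_(1) A_(3)` on covariant 3-tensors -/
def op13 (A : V → V) (ψ : V → V → V → C) : V → V → V → C := fun X Y Z => ψ (A X) Y (A Z)

/-- the operator `A_(23) = A_(2) A_(3)` on covariant 3-tensors -/
def op23 (A : V → V) (ψ : V → V → V → C) : V → V → V → C := fun X Y Z => ψ X (A Y) (A Z)

/-- the operator `𝓛_A = A_(12) + A_(13) + A_(23)` on three-forms -/
def calL (A : V → V) (ψ : V → V → V → C) : V → V → V → C :=
  fun X Y Z => op12 A ψ X Y Z + op13 A ψ X Y Z + op23 A ψ X Y Z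

/-- the action `(A ν)(X) = -ν (A X)` of `A` on a one-form -/
def act1 (A : V → V) (ν : V → C) : V → C := fun X => -ν (A X)

/-- the action `(A ψ)(X,Y,Z) = -ψ(AX,AY,AZ)` of `A` on a three-form -/
def act3 (A : V → V) (ψ : V → V → V → C) : V → V → V → C :=
  fun X Y Z => -ψ (A X) (A Y) (A Z)

/-- wedge product of two one-forms -/
def wedge11 (α β : V → C) : V → V → C := fun X Y => α X * β Y - α Y * β X

/-- wedge product of a one-form and a two-form -/
def wedge12 (ν : V → C) (ω : V → V → C) : V → V → V → C :=
  fun X Y Z => ν X * ω Y Z - ν Y * ω X Z + ν Z * ω X Y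

/-- wedge product of two two-forms -/
def wedge22 (α β : V → V → C) : V → V → V → V → C := fun X Y Z W =>
  α X Y * β Z W - α X Z * β Y W + α X W * β Y Z
    + α Z W * β X Y - α Y W * β X Z + α Y Z * β X W

/-- a (0,3)-tensor is an alternating three-form -/
def IsAlt3 (T : V → V → V → C) : Prop :=
  (∀ X Y Z, T Y X Z = -T X Y Z) ∧ (∀ X Y Z, T X Z Y = -T X Y Z)

variable [AddCommGroup V] [Module C V]

/-- `C`-linearity (tensoriality) of a three-form in its first argument -/
def Lin3 (T : V → V → V → C) : Prop :=
  ∀ (f : C) X X' Y Z, T (f • X + X') Y Z = f * T X Y Z + T X' Y Z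

/-- `C`-linearity (tensoriality) of a one-form -/
def Lin1 (ν : V → C) : Prop := ∀ (f : C) X X', ν (f • X + X') = f * ν X + ν X'

end ops

section derived

variable {n : ℕ} {C V : Type*} [CommRing C] [Algebra ℝ C] [AddCommGroup V] [Module C V]
  [Module ℝ V] [IsScalarTower ℝ C V]

variable (M : AQH n C V)

/-- the Kähler form `ω_A(X,Y) = g(X, A Y)` -/
def omega (A : V → V) : V → V → C := fun X Y => M.g X (A Y)

/-- `(∇_X A) Y` -/
def nabA (A : V → V) : V → V → V := fun X Y => M.nab X (A Y) - A (M.nab X Y)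

/-- covariant derivative of a 2-form: `(∇_X ψ)(Y,Z)` -/
def nab2 (ψ : V → V → C) : V → V → V → C :=
  fun X Y Z => M.D X (ψ Y Z) - ψ (M.nab X Y) Z - ψ Y (M.nab X Z)

/-- covariant derivative of a 4-form -/
def nab4 (ψ : V → V → V → V → C) : V → V → V → V → V → C :=
  fun X Y Z W U => M.D X (ψ Y Z W U) - ψ (M.nab X Y) Z W U - ψ Y (M.nab X Z) W U
    - ψ Y Z (M.nab X W) U - ψ Y Z W (M.nab X U)

/-- exterior derivative of a one-form -/
def d1 (ν : V → C) : V → V → C :=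
  fun X Y => M.D X (ν Y) - M.D Y (ν X) - ν (M.bracket X Y)

/-- exterior derivative of a two-form -/
def d2 (ψ : V → V → C) : V → V → V → C :=
  fun X Y Z => M.D X (ψ Y Z) - M.D Y (ψ X Z) + M.D Z (ψ X Y)
    - ψ (M.bracket X Y) Z + ψ (M.bracket X Z) Y - ψ (M.bracket Y Z) X

/-- exterior derivative of a four-form -/
def d4 (ψ : V → V → V → V → C) : V → V → V → V → V → C := fun X Y Z W U =>
  M.D X (ψ Y Z W U) - M.D Y (ψ X Z W U) + M.D Z (ψ X Y W U) - M.D W (ψ X Y Z U)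
      + M.D U (ψ X Y Z W)
    - ψ (M.bracket X Y) Z W U + ψ (M.bracket X Z) Y W U - ψ (M.bracket X W) Y Z U
      + ψ (M.bracket X U) Y Z W
    - ψ (M.bracket Y Z) X W U + ψ (M.bracket Y W) X Z U - ψ (M.bracket Y U) X Z W
    - ψ (M.bracket Z W) X Y U + ψ (M.bracket Z U) X Y W
    - ψ (M.bracket W U) X Y Z

/-- the Nijenhuis tensor `N_A(X,Y)` -/
def nijV (A : V → V) : V → V → V := fun X Y =>
  M.bracket X Y + A (M.bracket (A X) Y) + A (M.bracket X (A Y)) - M.bracket (A X) (A Y)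

/-- the Nijenhuis `(0,3)`-tensor `N_A(X,Y,Z) = g(X, N_A(Y,Z))` -/
def nij3 (A : V → V) : V → V → V → C := fun X Y Z => M.g X (M.nijV A Y Z)

/-- the induced inner product of two 2-forms,
`⟨ψ,φ⟩ = (1/2!) ψ(e_i,e_j) φ(e_i,e_j)` -/
def inner2 (ψ φ : V → V → C) : C :=
  (1/2 : ℝ) • ∑ i, ∑ j, ψ (M.frame i) (M.frame j) * φ (M.frame i) (M.frame j)

/-- the contraction `(Λ_A β)(X) = ⟨X ⌟ β, ω_A⟩` of a three-form -/
def Lam (A : V → V) (β : V → V → V → C) : V → C :=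
  fun X => (1/2 : ℝ) •
    ∑ i, ∑ j, β X (M.frame i) (M.frame j) * M.omega A (M.frame i) (M.frame j)

/-- `λ_I(X) = (1/2n) ⟨∇_X ω_J, ω_K⟩` -/
def lambdaI : V → C := fun X =>
  (1/(2*(n:ℝ))) • M.inner2 (fun Y Z => M.nab2 (M.omega M.J) X Y Z) (M.omega M.K)

/-- `λ_J(X) = (1/2n) ⟨∇_X ω_K, ω_I⟩` -/
def lambdaJ : V → C := fun X =>
  (1/(2*(n:ℝ))) • M.inner2 (fun Y Z => M.nab2 (M.omega M.K) X Y Z) (M.omega M.I)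

/-- `λ_K(X) = (1/2n) ⟨∇_X ω_I, ω_J⟩` -/
def lambdaK : V → C := fun X =>
  (1/(2*(n:ℝ))) • M.inner2 (fun Y Z => M.nab2 (M.omega M.I) X Y Z) (M.omega M.J)

/-- codifferential of a two-form -/
def codiff2 (ψ : V → V → C) : V → C := fun Z => -∑ i, M.nab2 ψ (M.frame i) (M.frame i) Z

/-- codifferential of a four-form -/
def codiff4 (ψ : V → V → V → V → C) : V → V → V → C :=
  fun X Y Z => -∑ i, M.nab4 ψ (M.frame i) (M.frame i) X Y Z

/-- `β_I = J dω_J + K dω_K` -/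
def betaI : V → V → V → C := fun X Y Z =>
  act3 M.J (M.d2 (M.omega M.J)) X Y Z + act3 M.K (M.d2 (M.omega M.K)) X Y Z

/-- `β_J = K dω_K + I dω_I` -/
def betaJ : V → V → V → C := fun X Y Z =>
  act3 M.K (M.d2 (M.omega M.K)) X Y Z + act3 M.I (M.d2 (M.omega M.I)) X Y Z

/-- `β_K = I dω_I + J dω_J` -/
def betaK : V → V → V → C := fun X Y Z =>
  act3 M.I (M.d2 (M.omega M.I)) X Y Z + act3 M.J (M.d2 (M.omega M.J)) X Y Z

/-- the intrinsic torsion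
`ξ_X Y = -(1/4) Σ_A A (∇_X A) Y + (1/2) Σ_A λ_A(X) A Y` -/
def xi : V → V → V := fun X Y =>
  (-(1/4 : ℝ)) • (M.I (M.nabA M.I X Y) + M.J (M.nabA M.J X Y) + M.K (M.nabA M.K X Y))
    + (1/2 : ℝ) • (M.lambdaI X • M.I Y + M.lambdaJ X • M.J Y + M.lambdaK X • M.K Y)

/-- the one-form `ν^I_4 = I Λ_I β_I` -/
def nu4I : V → C := act1 M.I (M.Lam M.I M.betaI)

/-- the one-form `ν^J_4 = J Λ_J β_J` -/
def nu4J : V → C := act1 M.J (M.Lam M.J M.betaJ)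

/-- the one-form `ν^K_4 = K Λ_K β_K` -/
def nu4K : V → C := act1 M.K (M.Lam M.K M.betaK)

/-- `ν^I_3`, determined by `J Λ_J β_I = (1/(2n-1)) (ν^I_4 + (2n+1)(n-1) ν^I_3)` -/
def nu3I : V → C := fun X =>
  (1/((2*(n:ℝ)+1) * ((n:ℝ)-1))) •
    ((2*(n:ℝ)-1) • act1 M.J (M.Lam M.J M.betaI) X - M.nu4I X)

/-- `ν^J_3`, determined by `K Λ_K β_J = (1/(2n-1)) (ν^J_4 + (2n+1)(n-1) ν^J_3)` -/
def nu3J : V → C := fun X =>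
  (1/((2*(n:ℝ)+1) * ((n:ℝ)-1))) •
    ((2*(n:ℝ)-1) • act1 M.K (M.Lam M.K M.betaJ) X - M.nu4J X)

/-- `ν^K_3`, determined by `I Λ_I β_K = (1/(2n-1)) (ν^K_4 + (2n+1)(n-1) ν^K_3)` -/
def nu3K : V → C := fun X =>
  (1/((2*(n:ℝ)+1) * ((n:ℝ)-1))) •
    ((2*(n:ℝ)-1) • act1 M.I (M.Lam M.I M.betaK) X - M.nu4K X)

/-- `β^{(E)}_{3I} = -(1/2) Jν^I_3 ∧ ω_J - (1/2) Kν^I_3 ∧ ω_K + (1/(2n-1)) Iν^I_3 ∧ ω_I` -/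
def betaE3I : V → V → V → C := fun X Y Z =>
  (-(1/2:ℝ)) • wedge12 (act1 M.J M.nu3I) (M.omega M.J) X Y Z
    + (-(1/2:ℝ)) • wedge12 (act1 M.K M.nu3I) (M.omega M.K) X Y Z
    + (1/(2*(n:ℝ)-1)) • wedge12 (act1 M.I M.nu3I) (M.omega M.I) X Y Z

def betaE3J : V → V → V → C := fun X Y Z =>
  (-(1/2:ℝ)) • wedge12 (act1 M.K M.nu3J) (M.omega M.K) X Y Z
    + (-(1/2:ℝ)) • wedge12 (act1 M.I M.nu3J) (M.omega M.I) X Y Z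
    + (1/(2*(n:ℝ)-1)) • wedge12 (act1 M.J M.nu3J) (M.omega M.J) X Y Z

def betaE3K : V → V → V → C := fun X Y Z =>
  (-(1/2:ℝ)) • wedge12 (act1 M.I M.nu3K) (M.omega M.I) X Y Z
    + (-(1/2:ℝ)) • wedge12 (act1 M.J M.nu3K) (M.omega M.J) X Y Z
    + (1/(2*(n:ℝ)-1)) • wedge12 (act1 M.K M.nu3K) (M.omega M.K) X Y Z

/-- `β_{4I} = -(1/(2n-1)) Iν^I_4 ∧ ω_I` -/
def beta4I : V → V → V → C := fun X Y Z =>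
  (-(1/(2*(n:ℝ)-1))) • wedge12 (act1 M.I M.nu4I) (M.omega M.I) X Y Z

def beta4J : V → V → V → C := fun X Y Z =>
  (-(1/(2*(n:ℝ)-1))) • wedge12 (act1 M.J M.nu4J) (M.omega M.J) X Y Z

def beta4K : V → V → V → C := fun X Y Z =>
  (-(1/(2*(n:ℝ)-1))) • wedge12 (act1 M.K M.nu4K) (M.omega M.K) X Y Z

/-- `β_I^{(3+K)} = β_I - β^{(E)}_{3I} - β_{4I}` -/
def beta3KI : V → V → V → C := fun X Y Z => M.betaI X Y Z - M.betaE3I X Y Z - M.beta4I X Y Z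

def beta3KJ : V → V → V → C := fun X Y Z => M.betaJ X Y Z - M.betaE3J X Y Z - M.beta4J X Y Z

def beta3KK : V → V → V → C := fun X Y Z => M.betaK X Y Z - M.betaE3K X Y Z - M.beta4K X Y Z

/-- `β_I^{(3)} = (1/6) (2 - 𝓛_J - 𝓛_K) β_I^{(3+K)}` -/
def beta3I : V → V → V → C := fun X Y Z =>
  (1/6:ℝ) • ((2:ℝ) • M.beta3KI X Y Z - calL M.J M.beta3KI X Y Z - calL M.K M.beta3KI X Y Z)

def beta3J : V → V → V → C := fun X Y Z =>
  (1/6:ℝ) • ((2:ℝ) • M.beta3KJ X Y Z - calL M.K M.beta3KJ X Y Z - calL M.I M.beta3KJ X Y Z)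

def beta3K : V → V → V → C := fun X Y Z =>
  (1/6:ℝ) • ((2:ℝ) • M.beta3KK X Y Z - calL M.I M.beta3KK X Y Z - calL M.J M.beta3KK X Y Z)

/-- `β_I^{(K)} = (1/6) (4 + 𝓛_J + 𝓛_K) β_I^{(3+K)}` -/
def betaKI : V → V → V → C := fun X Y Z =>
  (1/6:ℝ) • ((4:ℝ) • M.beta3KI X Y Z + calL M.J M.beta3KI X Y Z + calL M.K M.beta3KI X Y Z)

def betaKJ : V → V → V → C := fun X Y Z =>
  (1/6:ℝ) • ((4:ℝ) • M.beta3KJ X Y Z + calL M.K M.beta3KJ X Y Z + calL M.I M.beta3KJ X Y Z)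

def betaKK : V → V → V → C := fun X Y Z =>
  (1/6:ℝ) • ((4:ℝ) • M.beta3KK X Y Z + calL M.I M.beta3KK X Y Z + calL M.J M.beta3KK X Y Z)

/-- the three-form `ψ^{(3)} = (1/12)(β_I^{(3)} + β_J^{(3)} + β_K^{(3)})` determining `ξ_{33}` -/
def psi3 : V → V → V → C := fun X Y Z =>
  (1/12:ℝ) • (M.beta3I X Y Z + M.beta3J X Y Z + M.beta3K X Y Z)

/-- the three-form `ψ^{(K)} = -(1/48)(β_I^{(K)} + β_J^{(K)} + β_K^{(K)})` determining `ξ_{KH}` -/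
def psiK : V → V → V → C := fun X Y Z =>
  (-(1/48:ℝ)) • (M.betaKI X Y Z + M.betaKJ X Y Z + M.betaKK X Y Z)

/-- the three-form `ψ^{(3)}_I` determining `ξ_{3H}` -/
def psi3I : V → V → V → C := fun X Y Z =>
  (-(1/8:ℝ)) • M.beta3I X Y Z
    + (1/48:ℝ) • ((3:ℝ) • (M.beta3I X Y Z + M.beta3J X Y Z + M.beta3K X Y Z)
        + calL M.I (fun a b c => M.beta3I a b c + M.beta3J a b c + M.beta3K a b c) X Y Z)

def psi3J : V → V → V → C := fun X Y Z =>
  (-(1/8:ℝ)) • M.beta3J X Y Z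
    + (1/48:ℝ) • ((3:ℝ) • (M.beta3I X Y Z + M.beta3J X Y Z + M.beta3K X Y Z)
        + calL M.J (fun a b c => M.beta3I a b c + M.beta3J a b c + M.beta3K a b c) X Y Z)

def psi3K : V → V → V → C := fun X Y Z =>
  (-(1/8:ℝ)) • M.beta3K X Y Z
    + (1/48:ℝ) • ((3:ℝ) • (M.beta3I X Y Z + M.beta3J X Y Z + M.beta3K X Y Z)
        + calL M.K (fun a b c => M.beta3I a b c + M.beta3J a b c + M.beta3K a b c) X Y Z)

/-- the three-form `ψ^{(K)}_I` determining `ξ_{K3}` -/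
def psiKI : V → V → V → C := fun X Y Z =>
  (-(1/2:ℝ)) • M.betaKI X Y Z
    + (1/6:ℝ) • (M.betaKI X Y Z + M.betaKJ X Y Z + M.betaKK X Y Z)

def psiKJ : V → V → V → C := fun X Y Z =>
  (-(1/2:ℝ)) • M.betaKJ X Y Z
    + (1/6:ℝ) • (M.betaKI X Y Z + M.betaKJ X Y Z + M.betaKK X Y Z)

def psiKK : V → V → V → C := fun X Y Z =>
  (-(1/2:ℝ)) • M.betaKK X Y Z
    + (1/6:ℝ) • (M.betaKI X Y Z + M.betaKJ X Y Z + M.betaKK X Y Z)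

/-- the one-form `θ^ξ` determining `ξ_{EH}`,
defined by `(6/n)(2n+1)(n-1) θ^ξ(X) = -⟨ξ_{e_i} e_i, X⟩` -/
def thetaXi : V → C := fun X =>
  (-((n:ℝ)/(6*(2*(n:ℝ)+1)*((n:ℝ)-1)))) • ∑ i, M.g (M.xi (M.frame i) (M.frame i)) X

/-- the local one-form `θ^ξ_I`, defined by `(2/n)(2n+1)(n-1) θ^ξ_I(X) = -⟨I ξ_{e_i} I e_i, X⟩` -/
def thetaXiI : V → C := fun X =>
  (-((n:ℝ)/(2*(2*(n:ℝ)+1)*((n:ℝ)-1)))) •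
    ∑ i, M.g (M.I (M.xi (M.frame i) (M.I (M.frame i)))) X

def thetaXiJ : V → C := fun X =>
  (-((n:ℝ)/(2*(2*(n:ℝ)+1)*((n:ℝ)-1)))) •
    ∑ i, M.g (M.J (M.xi (M.frame i) (M.J (M.frame i)))) X

def thetaXiK : V → C := fun X =>
  (-((n:ℝ)/(2*(2*(n:ℝ)+1)*((n:ℝ)-1)))) •
    ∑ i, M.g (M.K (M.xi (M.frame i) (M.K (M.frame i)))) X

/-- `α_I = -λ_I ⊗ g + (1/2)(J_(2) - J_(3)) ∇ω_K` -/
def alphaI : V → V → V → C := fun X Y Z =>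
  -(M.lambdaI X * M.g Y Z)
    + (1/2:ℝ) • (-(M.nab2 (M.omega M.K) X (M.J Y) Z) + M.nab2 (M.omega M.K) X Y (M.J Z))

def alphaJ : V → V → V → C := fun X Y Z =>
  -(M.lambdaJ X * M.g Y Z)
    + (1/2:ℝ) • (-(M.nab2 (M.omega M.I) X (M.K Y) Z) + M.nab2 (M.omega M.I) X Y (M.K Z))

def alphaK : V → V → V → C := fun X Y Z =>
  -(M.lambdaK X * M.g Y Z)
    + (1/2:ℝ) • (-(M.nab2 (M.omega M.J) X (M.I Y) Z) + M.nab2 (M.omega M.J) X Y (M.I Z))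

/-- the one-form `η_I(X) = α_I(e_i; e_i, X)` -/
def etaI : V → C := fun X => ∑ i, M.alphaI (M.frame i) (M.frame i) X

def etaJ : V → C := fun X => ∑ i, M.alphaJ (M.frame i) (M.frame i) X

def etaK : V → C := fun X => ∑ i, M.alphaK (M.frame i) (M.frame i) X

/-- the fundamental four-form `Ω = Σ_A ω_A ∧ ω_A` -/
def Omega4 : V → V → V → V → C := fun X Y Z W =>
  wedge22 (M.omega M.I) (M.omega M.I) X Y Z W
    + wedge22 (M.omega M.J) (M.omega M.J) X Y Z W
    + wedge22 (M.omega M.K) (M.omega M.K) X Y Z W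

/-- the one-form `θ^{d*Ω} = (1/3) Σ_A A Λ_A d*Ω` -/
def thetaDOmega : V → C := fun X =>
  (1/3:ℝ) • (act1 M.I (M.Lam M.I (M.codiff4 M.Omega4)) X
    + act1 M.J (M.Lam M.J (M.codiff4 M.Omega4)) X
    + act1 M.K (M.Lam M.K (M.codiff4 M.Omega4)) X)

/-- the vector-valued torsion: `g(W, T(X,Y)) = T(W,X,Y)` -/
def Tvec (T : V → V → V → C) : V → V → V := fun X Y => ∑ i, T (M.frame i) X Y • M.frame i

/-- the connection `∇ + (1/2) T` associated to a torsion (0,3)-tensor `T` -/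
def nabT (T : V → V → V → C) : V → V → V := fun X Y => M.nab X Y + (1/2:ℝ) • M.Tvec T X Y

/-- a connection is metric -/
def MetricConn (nab' : V → V → V) : Prop :=
  ∀ X Y Z, M.D X (M.g Y Z) = M.g (nab' X Y) Z + M.g Y (nab' X Z)

/-- a connection is quaternionic, with associated local one-forms `γ_I, γ_J, γ_K`:
`∇'_X I = γ_K(X) J - γ_J(X) K`, and cyclically -/
def QuatConn (nab' : V → V → V) (γI γJ γK : V → C) : Prop :=
  (∀ X Y, nab' X (M.I Y) - M.I (nab' X Y) = γK X • M.J Y - γJ X • M.K Y) ∧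
  (∀ X Y, nab' X (M.J Y) - M.J (nab' X Y) = γI X • M.K Y - γK X • M.I Y) ∧
  (∀ X Y, nab' X (M.K Y) - M.K (nab' X Y) = γJ X • M.I Y - γI X • M.J Y)

/-- the HKT condition: `I, J, K` integrable and there is a metric connection
`∇ + (1/2)T` with totally skew torsion making `I, J, K` parallel -/
def IsHKT : Prop :=
  (∀ X Y, M.nijV M.I X Y = 0) ∧ (∀ X Y, M.nijV M.J X Y = 0) ∧
  (∀ X Y, M.nijV M.K X Y = 0) ∧
  ∃ T : V → V → V → C, IsAlt3 T ∧ Lin3 T ∧ M.MetricConn (M.nabT T) ∧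
    (∀ X Y, M.nabT T X (M.I Y) = M.I (M.nabT T X Y)) ∧
    (∀ X Y, M.nabT T X (M.J Y) = M.J (M.nabT T X Y)) ∧
    (∀ X Y, M.nabT T X (M.K Y) = M.K (M.nabT T X Y))

/-- membership of a three-form in `KH`: type `{2,1}` for each `A` and `Λ_A ψ = 0` -/
def InKH3 (ψ : V → V → V → C) : Prop :=
  IsAlt3 ψ ∧ Lin3 ψ ∧
  calL M.I ψ = ψ ∧ calL M.J ψ = ψ ∧ calL M.K ψ = ψ ∧
  M.Lam M.I ψ = 0 ∧ M.Lam M.J ψ = 0 ∧ M.Lam M.K ψ = 0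

/-- the `(0,3)`-tensor of the `KH`-component of the torsion determined by `ψ^{(K)}`:
`3ψ - Σ_A A_(23) ψ` -/
def xiKH3 (ψ : V → V → V → C) : V → V → V → C := fun X Y Z =>
  (3:ℝ) • ψ X Y Z - (op23 M.I ψ X Y Z + op23 M.J ψ X Y Z + op23 M.K ψ X Y Z)

/-- the `(0,3)`-tensor of the `EH`-component of the torsion determined by the
one-form `θ`: `3 e_i ⊗ e_i ∧ θ - Σ_A (e_i ⊗ A e_i ∧ A θ + (2/n) A θ ⊗ ω_A)` -/
def xiEH3 (θ : V → C) : V → V → V → C := fun X Y Z =>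
  (3:ℝ) • ∑ i, M.g (M.frame i) X *
      (M.g (M.frame i) Y * θ Z - M.g (M.frame i) Z * θ Y)
  - ((∑ i, M.g (M.frame i) X *
        (M.g (M.I (M.frame i)) Y * act1 M.I θ Z - M.g (M.I (M.frame i)) Z * act1 M.I θ Y))
    + (∑ i, M.g (M.frame i) X *
        (M.g (M.J (M.frame i)) Y * act1 M.J θ Z - M.g (M.J (M.frame i)) Z * act1 M.J θ Y))
    + (∑ i, M.g (M.frame i) X *
        (M.g (M.K (M.frame i)) Y * act1 M.K θ Z - M.g (M.K (M.frame i)) Z * act1 M.K θ Y)))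
  - (2/(n:ℝ)) • (act1 M.I θ X * M.omega M.I Y Z + act1 M.J θ X * M.omega M.J Y Z
      + act1 M.K θ X * M.omega M.K Y Z)

/-- the intrinsic torsion lies in `(K+E)H`: it is the sum of a `KH`-tensor and an
`EH`-tensor as described in §3 of the paper -/
def inKEH : Prop :=
  ∃ (ψ : V → V → V → C) (θ : V → C), M.InKH3 ψ ∧ Lin1 θ ∧
    ∀ X Y Z, M.g Y (M.xi X Z) = M.xiKH3 ψ X Y Z + M.xiEH3 θ X Y Z

end derived

end AQH

/-!
The HKT torsion `T` is the torsion of the Bismut connections of `I`, `J` and `K` simultaneously.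
For each of these structures `A`, parallelism expresses `∇A` through `T`, and integrability is the
identity `𝓛_A T = T`; together they give `dω_A = T(A·, A·, A·)`, that is `A dω_A = T`. Tracing
`𝓛_J T = T` with `I`, and cyclically, shows that the contractions of `T` with `I`, `J` and `K`
define one and the same Lee form `t`. Every one-form attached to `dω_A`, `β_A`, `λ_A` or `ξ` is a
contraction of `T` with `I`, `J` or `K`, hence a multiple of `t`; one computation for `I` suffices,
because the adapted basis may be rotated to `(J, K, I)`.
-/

namespace AQH

section IsAlt3

variable {C V : Type*} [CommRing C] {T : V → V → V → C}

theorem IsAlt3.rotate (h : IsAlt3 T) (X Y Z : V) : T Y Z X = T X Y Z := by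
  rw [h.2 Y X Z, h.1 X Y Z, neg_neg]

theorem IsAlt3.self_right [Algebra ℝ C] (h : IsAlt3 T) (X Y : V) : T X Y Y = 0 := by
  have h2 : (2 : ℝ) • T X Y Y = 0 := by rw [two_smul]; linear_combination h.2 X Y Y
  exact (smul_eq_zero_iff_right two_ne_zero).mp h2

theorem IsAlt3.self_left [Algebra ℝ C] (h : IsAlt3 T) (X Y : V) : T X X Y = 0 :=
  (h.rotate Y X X).trans (h.self_right Y X)

end IsAlt3

section Bundling

variable {C V W : Type*} [CommRing C] [AddCommGroup V] [Module C V] [AddCommGroup W] [Module C W]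

/-- The linear map underlying a function that is `C`-linear in the one-axiom form used in the
fields of `AQH`. -/
def linearMapOf (φ : V → W) (h : ∀ (f : C) X Y, φ (f • X + Y) = f • φ X + φ Y) : V →ₗ[C] W where
  toFun := φ
  map_add' X Y := by simpa only [one_smul] using h 1 X Y
  map_smul' f X := by
    have h0 : φ 0 = 0 := by simpa using h 1 0 0
    simpa [h0] using h f X 0

/-- An alternating three-form that is tensorial in its first argument, as a trilinear map. -/
def IsAlt3.toTrilinear {T : V → V → V → C} (h : IsAlt3 T) (hlin : Lin3 T) :
    V →ₗ[C] V →ₗ[C] V →ₗ[C] C :=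
  linearMapOf (fun X => linearMapOf (fun Y => linearMapOf (T X Y)
      (fun f Z Z' => by simpa only [← h.rotate _ X Y, smul_eq_mul] using hlin f Z Z' X Y))
    (fun f Y Y' => LinearMap.ext fun Z => by
      change T X (f • Y + Y') Z = f * T X Y Z + T X Y' Z
      simpa only [← h.rotate X _ Z] using hlin f Y Y' Z X))
  (fun f X X' => LinearMap.ext₂ fun Y Z => hlin f X X' Y Z)

end Bundling

section Metric

variable {n : ℕ} {C V : Type*} [CommRing C] [Algebra ℝ C] [AddCommGroup V] [Module C V]
  (M : AQH n C V)

/-- The Riemannian metric `g` as a bilinear map. -/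
def metric : V →ₗ[C] V →ₗ[C] C :=
  LinearMap.mk₂ C M.g M.g_add M.g_smul
    (fun X Y Z => by simp only [M.g_symm X, M.g_add])
    (fun f X Y => by simp only [M.g_symm X, M.g_smul, smul_eq_mul])

theorem metric_apply (X Y : V) : M.metric X Y = M.g X Y := rfl

theorem g_neg_left (X Y : V) : M.g (-X) Y = -M.g X Y := by
  simp only [← metric_apply, map_neg, LinearMap.neg_apply]

theorem g_neg_right (X Y : V) : M.g X (-Y) = -M.g X Y := by
  simp only [← metric_apply, map_neg]

theorem sum_apply_frame_mul_g (ν : V →ₗ[C] C) (X : V) :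
    ∑ i, ν (M.frame i) * M.g (M.frame i) X = ν X := by
  conv_rhs => rw [M.frame_span X]
  simp only [map_sum, map_smul, smul_eq_mul, M.g_symm X, mul_comm]

/-- `A` is an almost complex structure compatible with the metric. -/
structure IsHermitian (A : V → V) : Prop where
  map_smul_add : ∀ (f : C) X Y, A (f • X + Y) = f • A X + A Y
  sq : ∀ X, A (A X) = -X
  isometry : ∀ X Y, M.g (A X) (A Y) = M.g X Y

namespace IsHermitian

variable {M} {A : V → V}

/-- A compatible almost complex structure as a bundled endomorphism. -/
def toLinearMap (hA : M.IsHermitian A) : V →ₗ[C] V := linearMapOf A hA.map_smul_add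

theorem map_neg (hA : M.IsHermitian A) (X : V) : A (-X) = -A X :=
  _root_.map_neg hA.toLinearMap X

theorem skew (hA : M.IsHermitian A) (X Y : V) : M.g (A X) Y = -M.g X (A Y) := by
  rw [← hA.isometry X (A Y), hA.sq, g_neg_right, neg_neg]

theorem sum_apply_frame_mul_g (hA : M.IsHermitian A) (ν : V →ₗ[C] C) (X : V) :
    ∑ i, ν (M.frame i) * M.g (A (M.frame i)) X = -ν (A X) := by
  simp only [hA.skew, mul_neg, Finset.sum_neg_distrib, M.sum_apply_frame_mul_g]

theorem sum_apply_map_frame (hA : M.IsHermitian A) (b : V →ₗ[C] V →ₗ[C] C) (B : V →ₗ[C] V) :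
    ∑ i, b (A (M.frame i)) (B (M.frame i)) = -∑ i, b (M.frame i) (B (A (M.frame i))) := by
  have hleft : ∀ i, b (A (M.frame i)) (B (M.frame i))
      = ∑ j, b (M.frame j) (B (M.frame i)) * M.g (M.frame j) (A (M.frame i)) := fun i =>
    (M.sum_apply_frame_mul_g (b.flip (B (M.frame i))) _).symm
  have hright : ∀ j, b (M.frame j) (B (A (M.frame j)))
      = ∑ i, b (M.frame j) (B (M.frame i)) * M.g (M.frame i) (A (M.frame j)) := fun j =>
    (M.sum_apply_frame_mul_g (b (M.frame j) ∘ₗ B) _).symm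
  simp only [hleft, hright, ← Finset.sum_neg_distrib]
  rw [Finset.sum_comm]
  refine Finset.sum_congr rfl fun j _ => Finset.sum_congr rfl fun i _ => ?_
  rw [M.g_symm (M.frame j), hA.skew, mul_neg]

end IsHermitian

/-- The one-form `X ↦ ∑ᵢ T(X, eᵢ, A eᵢ)`, a contraction of a three-form `T` with `A`. -/
def torsionTrace (T : V →ₗ[C] V →ₗ[C] V →ₗ[C] C) (A : V → V) : V →ₗ[C] C :=
  ∑ i, (T.flip (M.frame i)).flip (A (M.frame i))

/-- The one-form `t(X) = ½ ∑ᵢ T(AX, eᵢ, A eᵢ)`; for the torsion `T` of the Bismut connection of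
the Hermitian structure `A` this is the Lee form `A d*ω_A`. -/
def leeForm (T : V →ₗ[C] V →ₗ[C] V →ₗ[C] C) (A : V → V) : V → C :=
  fun X => (1/2 : ℝ) • M.torsionTrace T A (A X)

variable {M} {T : V →ₗ[C] V →ₗ[C] V →ₗ[C] C} {A : V → V}

theorem sum_apply_frame_map_frame (X : V) :
    ∑ i, T X (M.frame i) (A (M.frame i)) = M.torsionTrace T A X := by
  simp [torsionTrace]

theorem torsionTrace_map_self (A : V → V) (X : V) :
    M.torsionTrace T A (A X) = (2 : ℝ) • M.leeForm T A X := by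
  rw [leeForm]
  module

end Metric

section Bismut

variable {n : ℕ} {C V : Type*} [CommRing C] [Algebra ℝ C] [AddCommGroup V] [Module C V]
  (M : AQH n C V)

/-- The `(0,3)`-tensor underlying a trilinear map. -/
abbrev tensor (T : V →ₗ[C] V →ₗ[C] V →ₗ[C] C) : V → V → V → C :=
  fun X Y Z => T X Y Z

theorem inner2_omega (b : V →ₗ[C] V →ₗ[C] C) (A : V → V) :
    M.inner2 (fun Y Z => b Y Z) (M.omega A)
      = (1/2 : ℝ) • ∑ i, b (A (M.frame i)) (M.frame i) := by
  rw [inner2, Finset.sum_comm]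
  simp only [omega]
  exact congrArg _ (Finset.sum_congr rfl fun i _ => M.sum_apply_frame_mul_g (b.flip (M.frame i)) _)

theorem g_Tvec (T : V →ₗ[C] V →ₗ[C] V →ₗ[C] C) (W X Y : V) :
    M.g W (M.Tvec (tensor T) X Y) = T W X Y := by
  rw [← metric_apply, Tvec, map_sum]
  simp only [map_smul, smul_eq_mul, metric_apply]
  simpa only [M.g_symm W, LinearMap.flip_apply] using M.sum_apply_frame_mul_g ((T.flip X).flip Y) W

variable [Module ℝ V]

/-- `T` is the torsion of a Bismut connection `∇ + ½T` of the integrable Hermitian structure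
`A`: a metric connection with skew-symmetric torsion making `A` parallel. -/
structure IsBismutTorsion (T : V →ₗ[C] V →ₗ[C] V →ₗ[C] C) (A : V → V) : Prop
    extends M.IsHermitian A where
  alt : IsAlt3 (tensor T)
  metricConn : M.MetricConn (M.nabT (tensor T))
  parallel : ∀ X Y, M.nabT (tensor T) X (A Y) = A (M.nabT (tensor T) X Y)
  integrable : ∀ X Y, M.nijV A X Y = 0

variable {M} {T : V →ₗ[C] V →ₗ[C] V →ₗ[C] C} {A : V → V}

theorem nabT_sub_nabT {T : V → V → V → C} (h : IsAlt3 T) (X Y : V) :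
    M.nabT T X Y - M.nabT T Y X = M.bracket X Y + M.Tvec T X Y := by
  have hskew : M.Tvec T Y X = -M.Tvec T X Y := by
    simp only [Tvec, h.2 _ X Y, neg_smul, Finset.sum_neg_distrib]
  rw [← M.torsion_free, nabT, nabT, hskew]
  module

namespace IsBismutTorsion

theorem nijV_eq_Tvec (h : M.IsBismutTorsion T A) (X Y : V) :
    M.nijV A X Y = M.Tvec (tensor T) (A X) (A Y) - M.Tvec (tensor T) X Y
      - A (M.Tvec (tensor T) (A X) Y) - A (M.Tvec (tensor T) X (A Y)) := by
  have hbracket : ∀ X Y, M.bracket X Y = M.nabT (tensor T) X Y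
      - M.nabT (tensor T) Y X - M.Tvec (tensor T) X Y := fun X Y => by
    rw [nabT_sub_nabT h.alt, add_sub_cancel_right]
  have hsub : ∀ U W, A (U - W) = A U - A W := map_sub h.toLinearMap
  simp only [nijV, hbracket, h.parallel, hsub, h.sq]
  abel

/-- Integrability of `A` says that the torsion has type `(2,1) + (1,2)`. -/
theorem calL_eq (h : M.IsBismutTorsion T A) (X Y Z : V) :
    T (A X) (A Y) Z + T (A X) Y (A Z) + T X (A Y) (A Z) = T X Y Z := by
  have hpair := congrArg (M.metric X) ((h.nijV_eq_Tvec Y Z).symm.trans (h.integrable Y Z))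
  have hskew : ∀ W, M.g X (A W) = -M.g (A X) W := fun W => by rw [h.skew, neg_neg]
  simp only [map_sub, map_zero, metric_apply, hskew, g_Tvec] at hpair
  linear_combination hpair

theorem D_omega (h : M.IsBismutTorsion T A) (X Y Z : V) :
    M.D X (M.omega A Y Z) = M.omega A (M.nabT (tensor T) X Y) Z
      - M.omega A (M.nabT (tensor T) X Z) Y := by
  simp only [omega]
  rw [h.metricConn, h.parallel, M.g_symm Y, h.skew, sub_eq_add_neg]

theorem d2_omega (h : M.IsBismutTorsion T A) (X Y Z : V) :
    M.d2 (M.omega A) X Y Z = T (A X) (A Y) (A Z) := by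
  have hbracket : ∀ X Y Z, M.omega A (M.bracket X Y) Z
      = M.omega A (M.nabT (tensor T) X Y) Z
        - M.omega A (M.nabT (tensor T) Y X) Z - T (A Z) X Y := fun X Y Z => by
    rw [eq_sub_of_add_eq (nabT_sub_nabT h.alt X Y).symm]
    simp only [omega, ← metric_apply, map_sub, LinearMap.sub_apply]
    rw [metric_apply _ (M.Tvec _ X Y), M.g_symm (M.Tvec _ X Y), g_Tvec]
  have hcalL := h.calL_eq (A X) (A Y) (A Z)
  simp only [h.sq, map_neg, LinearMap.neg_apply, neg_neg] at hcalL
  simp only [d2, h.D_omega, hbracket]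
  linear_combination hcalL - h.alt.1 (A Y) X Z - h.alt.rotate (A Z) X Y

theorem act3_d2_omega (h : M.IsBismutTorsion T A) :
    act3 A (M.d2 (M.omega A)) = tensor T := by
  funext X Y Z
  simp only [act3, h.d2_omega, h.sq, map_neg, LinearMap.neg_apply, neg_neg]

end IsBismutTorsion

end Bismut

section Contractions

variable {n : ℕ} {C V : Type*} [CommRing C] [Algebra ℝ C] [AddCommGroup V] [Module C V]
  {M : AQH n C V} {T : V →ₗ[C] V →ₗ[C] V →ₗ[C] C} {A B : V → V}

theorem sum_apply_map_frame_frame (hT : IsAlt3 (tensor T)) (A : V → V) (X : V) :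
    ∑ i, T X (A (M.frame i)) (M.frame i) = -M.torsionTrace T A X := by
  have hskew : ∀ i, T X (A (M.frame i)) (M.frame i) = -T X (M.frame i) (A (M.frame i)) :=
    fun i => hT.2 X (M.frame i) (A (M.frame i))
  simp only [hskew, Finset.sum_neg_distrib, sum_apply_frame_map_frame]

theorem Lam_smul_tensor (hT : IsAlt3 (tensor T)) (r : ℝ) (A : V → V) (X : V) :
    M.Lam A (r • tensor T) X = -(r / 2) • M.torsionTrace T A X := by
  have hinner : M.Lam A (r • tensor T) X = M.inner2 (fun Y Z => (r • T X) Y Z) (M.omega A) := rfl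
  rw [hinner, inner2_omega]
  simp only [LinearMap.smul_apply, ← Finset.smul_sum, sum_apply_map_frame_frame hT]
  module

theorem act1_Lam_smul_tensor (hT : IsAlt3 (tensor T)) (r : ℝ) (A : V → V) :
    act1 A (M.Lam A (r • tensor T)) = r • M.leeForm T A := by
  funext X
  simp only [act1, Lam_smul_tensor hT, leeForm, Pi.smul_apply]
  module

variable [Module ℝ V]

namespace IsBismutTorsion

theorem Lam_d2_omega (h : M.IsBismutTorsion T A) (hB : M.IsHermitian B) (X : V) :
    M.Lam B (M.d2 (M.omega A)) X
      = (1/2 : ℝ) • ∑ i, T (A X) (M.frame i) (A (B (A (M.frame i)))) := by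
  let A' := h.toLinearMap
  have hinner : M.Lam B (M.d2 (M.omega A)) X
      = M.inner2 (fun Y Z => (T (A X)).compl₁₂ A' A' Y Z) (M.omega B) := by
    simp only [Lam, h.d2_omega]; rfl
  have hskew : ∀ i, T (A X) (A (B (M.frame i))) (A (M.frame i))
      = -T (A X) (A (M.frame i)) (A (B (M.frame i))) := fun i => h.alt.2 _ _ _
  rw [hinner, inner2_omega]
  change _ • ∑ i, T (A X) (A (B (M.frame i))) (A (M.frame i)) = _
  have hmove := h.sum_apply_map_frame (T (A X)) (A' ∘ₗ hB.toLinearMap)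
  simp only [hskew, Finset.sum_neg_distrib]
  exact congrArg _ (neg_eq_iff_eq_neg.mpr hmove)

theorem neg_Lam_d2_omega (h : M.IsBismutTorsion T A) :
    -M.Lam A (M.d2 (M.omega A)) = M.leeForm T A := by
  funext X
  simp only [Pi.neg_apply, h.Lam_d2_omega h.toIsHermitian, h.sq, h.map_neg, map_neg,
    Finset.sum_neg_distrib, sum_apply_frame_map_frame, leeForm, smul_neg, neg_neg]

variable [IsScalarTower ℝ C V]

theorem g_nabA (h : M.IsBismutTorsion T A) (X Y Z : V) :
    M.g Z (M.nabA A X Y) = -(1/2 : ℝ) • (T Z X (A Y) + T (A Z) X Y) := by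
  have hnabA : M.nabA A X Y
      = (1/2 : ℝ) • (A (M.Tvec (tensor T) X Y) - M.Tvec (tensor T) X (A Y)) := by
    have hpar := h.parallel X Y
    have hA : A (M.nab X Y + (1/2 : ℝ) • M.Tvec (tensor T) X Y)
        = A (M.nab X Y) + (1/2 : ℝ) • A (M.Tvec (tensor T) X Y) := by
      have hadd : ∀ U W, A (U + W) = A U + A W := map_add h.toLinearMap
      have hsmul : ∀ W, A ((1/2 : ℝ) • W) = (1/2 : ℝ) • A W :=
        LinearMap.map_smul_of_tower h.toLinearMap _
      rw [hadd, hsmul]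
    rw [nabT, nabT, hA] at hpar
    rw [nabA, eq_sub_of_add_eq hpar]
    module
  have hskew : ∀ W, M.g Z (A W) = -M.g (A Z) W := fun W => by rw [h.skew, neg_neg]
  rw [hnabA, ← metric_apply, LinearMap.map_smul_of_tower, map_sub, metric_apply, metric_apply,
    hskew, g_Tvec, g_Tvec]
  module

theorem g_apply_nabA (h : M.IsBismutTorsion T A) (X Y Z : V) :
    M.g (A (M.nabA A X Y)) Z = (1/2 : ℝ) • (T (A Z) X (A Y) - T Z X Y) := by
  rw [h.skew, M.g_symm, h.g_nabA, h.sq, map_neg, LinearMap.neg_apply, LinearMap.neg_apply]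
  module

theorem nab2_omega (h : M.IsBismutTorsion T A) (X Y Z : V) :
    M.nab2 (M.omega A) X Y Z = (1/2 : ℝ) • (T X Y (A Z) + T X (A Y) Z) := by
  have hnab : M.nab2 (M.omega A) X Y Z = M.g Y (M.nabA A X Z) := by
    simp only [nab2, omega, M.nab_metric]
    simp only [nabA, ← metric_apply, map_sub]
    ring
  have h1 : T Y X (A Z) = -T X Y (A Z) := h.alt.1 _ _ _
  have h2 : T (A Y) X Z = -T X (A Y) Z := h.alt.1 _ _ _
  rw [hnab, h.g_nabA, h1, h2]
  module

theorem act1_codiff2_omega (h : M.IsBismutTorsion T A) :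
    act1 A (M.codiff2 (M.omega A)) = M.leeForm T A := by
  funext X
  have hself : ∀ i, T (M.frame i) (M.frame i) (-X) = 0 := fun i => h.alt.self_left _ _
  have hrot : ∀ i, T (M.frame i) (A (M.frame i)) (A X) = T (A X) (M.frame i) (A (M.frame i)) :=
    fun i => h.alt.rotate _ _ _
  simp only [act1, codiff2, neg_neg, h.nab2_omega, h.sq, hself, zero_add, hrot, ← Finset.smul_sum,
    sum_apply_frame_map_frame, leeForm]

end IsBismutTorsion

end Contractions

section Quaternionic

variable {n : ℕ} {C V : Type*} [CommRing C] [Algebra ℝ C] [AddCommGroup V] [Module C V]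
  (M : AQH n C V)

theorem isHermitian_I : M.IsHermitian M.I := ⟨M.I_lin, M.I_sq, M.I_metric⟩

theorem isHermitian_J : M.IsHermitian M.J := ⟨M.J_lin, M.J_sq, M.J_metric⟩

theorem I_J (X : V) : M.I (M.J X) = M.K X := (M.K_def X).symm

theorem J_I (X : V) : M.J (M.I X) = -M.K X := by rw [M.K_def, M.anticomm, neg_neg]

theorem J_K (X : V) : M.J (M.K X) = M.I X := by
  rw [M.K_def, M.J_I, M.K_def, M.J_sq, M.isHermitian_I.map_neg, neg_neg]

theorem K_J (X : V) : M.K (M.J X) = -M.I X := by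
  rw [M.K_def, M.J_sq, M.isHermitian_I.map_neg]

theorem I_K (X : V) : M.I (M.K X) = -M.J X := by rw [M.K_def, M.I_sq]

theorem K_I (X : V) : M.K (M.I X) = M.J X := by
  rw [M.K_def, M.J_I, M.isHermitian_I.map_neg, M.I_K, neg_neg]

theorem isHermitian_K : M.IsHermitian M.K where
  map_smul_add := M.K_lin
  sq X := by rw [M.K_def, M.J_K, M.I_sq]
  isometry X Y := by rw [M.K_def, M.K_def, M.I_metric, M.J_metric]

/-- The same manifold with the adapted basis `(J, K, I)` in place of `(I, J, K)`. The objects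
attached to `I` by `M.rotate` are those attached to `J` by `M`, and so on cyclically. -/
def rotate : AQH n C V :=
  { M with
    I := M.J
    J := M.K
    K := M.I
    I_lin := M.J_lin
    J_lin := M.K_lin
    K_lin := M.I_lin
    I_sq := M.J_sq
    J_sq := M.isHermitian_K.sq
    K_def := fun X => (M.J_K X).symm
    anticomm := fun X => by rw [M.J_K, M.K_J, neg_neg]
    I_metric := M.J_metric
    J_metric := M.isHermitian_K.isometry }

variable [Module ℝ V]

theorem rotate_xi : M.rotate.xi = M.xi := by
  funext X Y
  change -(1/4 : ℝ) • (M.J (M.nabA M.J X Y) + M.K (M.nabA M.K X Y) + M.I (M.nabA M.I X Y))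
    + (1/2 : ℝ) • (M.lambdaJ X • M.J Y + M.lambdaK X • M.K Y + M.lambdaI X • M.I Y) = M.xi X Y
  rw [xi]
  congr 2 <;> abel

theorem rotate_thetaXi : M.rotate.thetaXi = M.thetaXi := by
  funext X
  rw [thetaXi, rotate_xi]
  rfl

theorem rotate_thetaXiI : M.rotate.thetaXiI = M.thetaXiJ := by
  funext X
  rw [thetaXiI, rotate_xi]
  rfl

theorem rotate_thetaXiJ : M.rotate.thetaXiJ = M.thetaXiK := by
  funext X
  rw [thetaXiJ, rotate_xi]
  rfl

/-- `T` is the torsion of an HKT connection: it is the torsion of the Bismut connections of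
`I`, `J` and `K` simultaneously. -/
structure IsHKTTorsion (T : V →ₗ[C] V →ₗ[C] V →ₗ[C] C) : Prop where
  bismutI : M.IsBismutTorsion T M.I
  bismutJ : M.IsBismutTorsion T M.J
  bismutK : M.IsBismutTorsion T M.K

variable {M} {T : V →ₗ[C] V →ₗ[C] V →ₗ[C] C}

theorem IsHKT.exists_isHKTTorsion (h : M.IsHKT) :
    ∃ T : V →ₗ[C] V →ₗ[C] V →ₗ[C] C, M.IsHKTTorsion T := by
  obtain ⟨hNI, hNJ, hNK, T, hT, hlin, hmetric, hI, hJ, hK⟩ := h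
  exact ⟨hT.toTrilinear hlin, ⟨M.isHermitian_I, hT, hmetric, hI, hNI⟩,
    ⟨M.isHermitian_J, hT, hmetric, hJ, hNJ⟩, ⟨M.isHermitian_K, hT, hmetric, hK, hNK⟩⟩

theorem IsBismutTorsion.rotate {A : V → V} (h : M.IsBismutTorsion T A) :
    M.rotate.IsBismutTorsion T A :=
  ⟨⟨h.map_smul_add, h.sq, h.isometry⟩, h.alt, h.metricConn, h.parallel, h.integrable⟩

namespace IsHKTTorsion

theorem rotate (h : M.IsHKTTorsion T) : M.rotate.IsHKTTorsion T :=
  ⟨h.bismutJ.rotate, h.bismutK.rotate, h.bismutI.rotate⟩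

/-- The trace of `𝓛_J T = T` with `I`; it makes the Lee forms of `I` and `K` agree. -/
theorem torsionTrace_I (h : M.IsHKTTorsion T) (X : V) :
    M.torsionTrace T M.I X = -M.torsionTrace T M.K (M.J X) := by
  have hcalL := Finset.sum_congr (s₁ := .univ) rfl fun i _ =>
    h.bismutJ.calL_eq X (M.frame i) (M.I (M.frame i))
  have hJI : ∑ i, T (M.J X) (M.J (M.frame i)) (M.I (M.frame i))
      = -∑ i, T (M.J X) (M.frame i) (M.I (M.J (M.frame i))) :=
    M.isHermitian_J.sum_apply_map_frame (T (M.J X)) h.bismutI.toLinearMap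
  have hJK : ∑ i, T X (M.J (M.frame i)) (M.K (M.frame i))
      = -∑ i, T X (M.frame i) (M.K (M.J (M.frame i))) :=
    M.isHermitian_J.sum_apply_map_frame (T X) h.bismutK.toLinearMap
  simp only [Finset.sum_add_distrib, Finset.sum_neg_distrib, hJI, hJK, M.I_J, M.J_I, M.K_J,
    map_neg, sum_apply_frame_map_frame] at hcalL
  have h2 : (2 : ℝ) • (M.torsionTrace T M.I X + M.torsionTrace T M.K (M.J X)) = 0 := by
    rw [two_smul]
    linear_combination -hcalL
  exact eq_neg_of_add_eq_zero_left ((smul_eq_zero_iff_right two_ne_zero).mp h2)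

theorem leeForm_K (h : M.IsHKTTorsion T) : M.leeForm T M.K = M.leeForm T M.I := by
  funext X
  rw [leeForm, leeForm, h.torsionTrace_I, M.J_I, map_neg, neg_neg]

theorem leeForm_J (h : M.IsHKTTorsion T) : M.leeForm T M.J = M.leeForm T M.I :=
  h.rotate.leeForm_K.symm

theorem act1_K_Lam_J (h : M.IsHKTTorsion T) :
    act1 M.K (M.Lam M.J (M.d2 (M.omega M.I))) = M.leeForm T M.I := by
  rw [← h.leeForm_J]
  funext X
  simp only [act1, h.bismutI.Lam_d2_omega M.isHermitian_J, M.J_I, M.I_K, map_neg,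
    M.isHermitian_I.map_neg, neg_neg, LinearMap.neg_apply, Finset.sum_neg_distrib,
    sum_apply_frame_map_frame, leeForm, smul_neg]

theorem act1_J_Lam_K (h : M.IsHKTTorsion T) :
    -act1 M.J (M.Lam M.K (M.d2 (M.omega M.I))) = M.leeForm T M.I := by
  rw [← h.leeForm_K]
  funext X
  simp only [Pi.neg_apply, act1, h.bismutI.Lam_d2_omega M.isHermitian_K, M.K_I,
    M.I_J, sum_apply_frame_map_frame, leeForm, neg_neg]

theorem betaI_eq (h : M.IsHKTTorsion T) : M.betaI = (2 : ℝ) • tensor T := by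
  funext X Y Z
  simp only [betaI, h.bismutJ.act3_d2_omega, h.bismutK.act3_d2_omega, Pi.smul_apply, two_smul]

theorem nu4I_eq (h : M.IsHKTTorsion T) : M.nu4I = (2 : ℝ) • M.leeForm T M.I := by
  rw [nu4I, h.betaI_eq, act1_Lam_smul_tensor h.bismutI.alt]

theorem nu3I_eq (h : M.IsHKTTorsion T) (hn : 1 < n) :
    M.nu3I = (4 / (2 * (n : ℝ) + 1)) • M.leeForm T M.I := by
  have hn1 : (n : ℝ) - 1 ≠ 0 := sub_ne_zero.mpr (by exact_mod_cast hn.ne')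
  funext X
  rw [nu3I, h.nu4I_eq, h.betaI_eq, act1_Lam_smul_tensor h.bismutJ.alt, h.leeForm_J]
  simp only [Pi.smul_apply]
  match_scalars
  field_simp
  ring

variable [IsScalarTower ℝ C V]

theorem lambdaI_apply (h : M.IsHKTTorsion T) (X : V) :
    M.lambdaI X = -(1 / (4 * (n : ℝ))) • M.torsionTrace T M.I X := by
  let J' := h.bismutJ.toLinearMap
  have hnab2 : (fun Y Z => M.nab2 (M.omega M.J) X Y Z)
      = fun Y Z => ((1/2 : ℝ) • ((T X).compl₂ J' + T X ∘ₗ J')) Y Z := by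
    funext Y Z
    exact h.bismutJ.nab2_omega X Y Z
  have hKJ : ∑ i, T X (M.K (M.frame i)) (M.J (M.frame i)) = -M.torsionTrace T M.I X := by
    refine (M.isHermitian_K.sum_apply_map_frame (T X) J').trans (congrArg _ ?_)
    rw [← sum_apply_frame_map_frame]
    exact Finset.sum_congr rfl fun i _ => congrArg _ (M.J_K _)
  have hJK : ∑ i, T X (M.J (M.K (M.frame i))) (M.frame i) = -M.torsionTrace T M.I X := by
    simp only [M.J_K, sum_apply_map_frame_frame h.bismutI.alt]
  have hsum : ∑ i, ((1/2 : ℝ) • ((T X).compl₂ J' + T X ∘ₗ J')) (M.K (M.frame i)) (M.frame i)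
      = -M.torsionTrace T M.I X := by
    change ∑ i, (1/2 : ℝ) • (T X (M.K (M.frame i)) (M.J (M.frame i))
      + T X (M.J (M.K (M.frame i))) (M.frame i)) = _
    rw [← Finset.smul_sum, Finset.sum_add_distrib, hKJ, hJK]
    module
  rw [lambdaI, hnab2, inner2_omega, hsum]
  match_scalars
  ring

theorem act1_lambdaI (h : M.IsHKTTorsion T) :
    act1 M.I M.lambdaI = (1 / (2 * (n : ℝ))) • M.leeForm T M.I := by
  funext X
  simp only [act1, h.lambdaI_apply, leeForm, Pi.smul_apply]
  match_scalars
  ring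

theorem sum_lambdaI_mul_g (h : M.IsHKTTorsion T) (X : V) :
    ∑ i, M.lambdaI (M.frame i) * M.g (M.I (M.frame i)) X
      = (1 / (2 * (n : ℝ))) • M.leeForm T M.I X := by
  simp only [h.lambdaI_apply, smul_mul_assoc, ← Finset.smul_sum,
    M.isHermitian_I.sum_apply_frame_mul_g, leeForm]
  match_scalars
  ring

theorem sum_lambdaJ_mul_g (h : M.IsHKTTorsion T) (X : V) :
    ∑ i, M.lambdaJ (M.frame i) * M.g (M.J (M.frame i)) X
      = (1 / (2 * (n : ℝ))) • M.leeForm T M.I X := by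
  rw [← h.leeForm_J]
  exact h.rotate.sum_lambdaI_mul_g X

theorem sum_lambdaK_mul_g (h : M.IsHKTTorsion T) (X : V) :
    ∑ i, M.lambdaK (M.frame i) * M.g (M.K (M.frame i)) X
      = (1 / (2 * (n : ℝ))) • M.leeForm T M.I X := by
  rw [← h.leeForm_J]
  exact h.rotate.sum_lambdaJ_mul_g X

theorem g_xi (h : M.IsHKTTorsion T) (X Y Z : V) :
    M.g (M.xi X Y) Z
      = -(1/8 : ℝ) • (T (M.I Z) X (M.I Y) + T (M.J Z) X (M.J Y) + T (M.K Z) X (M.K Y)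
          - (3 : ℝ) • T Z X Y)
        + (1/2 : ℝ) • (M.lambdaI X * M.g (M.I Y) Z + M.lambdaJ X * M.g (M.J Y) Z
          + M.lambdaK X * M.g (M.K Y) Z) := by
  rw [xi, M.g_symm, ← metric_apply]
  simp only [map_add, LinearMap.map_smul_of_tower, map_smul, metric_apply, M.g_symm Z,
    h.bismutI.g_apply_nabA, h.bismutJ.g_apply_nabA, h.bismutK.g_apply_nabA, smul_eq_mul]
  module

theorem g_I_xi_I (h : M.IsHKTTorsion T) (X Y Z : V) :
    M.g (M.I (M.xi X (M.I Y))) Z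
      = (1/8 : ℝ) • (T Z X Y + T (M.J Z) X (M.J Y) + T (M.K Z) X (M.K Y)
          - (3 : ℝ) • T (M.I Z) X (M.I Y))
        - (1/2 : ℝ) • (M.lambdaI X * M.g (M.I Y) Z - M.lambdaJ X * M.g (M.J Y) Z
          - M.lambdaK X * M.g (M.K Y) Z) := by
  have hI : M.g Y (M.I Z) = -M.g (M.I Y) Z := by rw [M.isHermitian_I.skew, neg_neg]
  have hJ : M.g (M.J Y) (M.I Z) = -M.g (M.K Y) Z := by
    rw [← M.I_J, M.isHermitian_I.skew, neg_neg]
  have hK : M.g (M.K Y) (M.I Z) = M.g (M.J Y) Z := by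
    rw [← neg_neg (M.J Y), ← M.I_K, g_neg_left, M.isHermitian_I.skew, neg_neg]
  simp only [M.isHermitian_I.skew (M.xi _ _), h.g_xi, M.I_sq, M.J_I, M.K_I, g_neg_left,
    hI, hJ, hK, map_neg, LinearMap.neg_apply, neg_neg, mul_neg]
  module

theorem sum_g_xi_frame (h : M.IsHKTTorsion T) (X : V) :
    ∑ i, M.g (M.xi (M.frame i) (M.frame i)) X
      = (3 * (1 / (4 * (n : ℝ)) - 1 / 4)) • M.leeForm T M.I X := by
  have hself : ∀ i, T X (M.frame i) (M.frame i) = 0 := fun i => h.bismutI.alt.self_right _ _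
  simp only [h.g_xi, hself, Finset.sum_add_distrib, ← Finset.smul_sum, smul_zero, sub_zero,
    sum_apply_frame_map_frame, torsionTrace_map_self, h.leeForm_J, h.leeForm_K,
    h.sum_lambdaI_mul_g, h.sum_lambdaJ_mul_g, h.sum_lambdaK_mul_g]
  match_scalars
  ring

theorem sum_g_I_xi_I_frame (h : M.IsHKTTorsion T) (X : V) :
    ∑ i, M.g (M.I (M.xi (M.frame i) (M.I (M.frame i)))) X
      = (1 / (4 * (n : ℝ)) - 1 / 4) • M.leeForm T M.I X := by
  have hself : ∀ i, T X (M.frame i) (M.frame i) = 0 := fun i => h.bismutI.alt.self_right _ _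
  simp only [h.g_I_xi_I, hself, Finset.sum_add_distrib, Finset.sum_sub_distrib, ← Finset.smul_sum,
    zero_add, sum_apply_frame_map_frame, torsionTrace_map_self, h.leeForm_J, h.leeForm_K,
    h.sum_lambdaI_mul_g, h.sum_lambdaJ_mul_g, h.sum_lambdaK_mul_g]
  match_scalars
  ring

theorem thetaXi_eq_thetaXiI (h : M.IsHKTTorsion T) : M.thetaXi = M.thetaXiI := by
  have hcoeff : (n : ℝ) / (6 * (2 * n + 1) * (n - 1)) = n / (2 * (2 * n + 1) * (n - 1)) / 3 := by
    rw [div_div]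
    congr 1
    ring
  funext X
  rw [thetaXi, thetaXiI, h.sum_g_xi_frame, h.sum_g_I_xi_I_frame, hcoeff]
  match_scalars
  ring

theorem thetaXi_eq_thetaXiJ (h : M.IsHKTTorsion T) : M.thetaXi = M.thetaXiJ := by
  rw [← M.rotate_thetaXi, h.rotate.thetaXi_eq_thetaXiI, M.rotate_thetaXiI]

theorem thetaXi_eq_thetaXiK (h : M.IsHKTTorsion T) : M.thetaXi = M.thetaXiK :=
  M.rotate_thetaXi.symm.trans (h.rotate.thetaXi_eq_thetaXiJ.trans M.rotate_thetaXiJ)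

theorem thetaXi_eq (h : M.IsHKTTorsion T) (hn : 1 < n) :
    M.thetaXi = (1 / (8 * (2 * (n : ℝ) + 1))) • M.leeForm T M.I := by
  have hn1 : (n : ℝ) - 1 ≠ 0 := sub_ne_zero.mpr (by exact_mod_cast hn.ne')
  have hn0 : (n : ℝ) ≠ 0 := by exact_mod_cast (zero_lt_one.trans hn).ne'
  funext X
  simp only [thetaXi, h.sum_g_xi_frame, Pi.smul_apply]
  match_scalars
  field_simp
  ring

theorem nu3I_eq_smul_thetaXi (h : M.IsHKTTorsion T) (hn : 1 < n) :
    M.nu3I = (32 : ℝ) • M.thetaXi := by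
  rw [h.nu3I_eq hn, h.thetaXi_eq hn, smul_smul]
  congr 1
  field_simp
  norm_num

end IsHKTTorsion

end Quaternionic

end AQH

open AQH in
/-- For a `4n`-dimensional HKT-manifold, with
`t = I d*ω_I = J d*ω_J = K d*ω_K` the common Lee form:
`t = -Λ_I dω_I = KΛ_J dω_I = -JΛ_K dω_I` (and cyclically);
`Iλ_I = Jλ_J = Kλ_K = (1/2n) t`; `θ^ξ = θ^ξ_I = θ^ξ_J = θ^ξ_K`;
`ν^I_4 = ν^J_4 = ν^K_4 = 2t`; and, for `n > 1`,
`ν^I_3 = ν^J_3 = ν^K_3 = 32 θ^ξ = (4/(2n+1)) t`. -/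
theorem statement12 {n : ℕ} {C V : Type*} [CommRing C] [Algebra ℝ C] [AddCommGroup V]
    [Module C V] [Module ℝ V] [IsScalarTower ℝ C V] (M : AQH n C V)
    (hHKT : M.IsHKT) :
    -- the three Lee forms agree; call the common value `t = I d*ω_I`
    (act1 M.I (M.codiff2 (M.omega M.I)) = act1 M.J (M.codiff2 (M.omega M.J)) ∧
     act1 M.J (M.codiff2 (M.omega M.J)) = act1 M.K (M.codiff2 (M.omega M.K))) ∧
    -- `t = -Λ_I dω_I = KΛ_J dω_I = -JΛ_K dω_I`, etc.
    (act1 M.I (M.codiff2 (M.omega M.I)) = -M.Lam M.I (M.d2 (M.omega M.I)) ∧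
     act1 M.I (M.codiff2 (M.omega M.I)) = act1 M.K (M.Lam M.J (M.d2 (M.omega M.I))) ∧
     act1 M.I (M.codiff2 (M.omega M.I)) = -act1 M.J (M.Lam M.K (M.d2 (M.omega M.I)))) ∧
    (act1 M.I (M.codiff2 (M.omega M.I)) = -M.Lam M.J (M.d2 (M.omega M.J)) ∧
     act1 M.I (M.codiff2 (M.omega M.I)) = act1 M.I (M.Lam M.K (M.d2 (M.omega M.J))) ∧
     act1 M.I (M.codiff2 (M.omega M.I)) = -act1 M.K (M.Lam M.I (M.d2 (M.omega M.J)))) ∧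
    (act1 M.I (M.codiff2 (M.omega M.I)) = -M.Lam M.K (M.d2 (M.omega M.K)) ∧
     act1 M.I (M.codiff2 (M.omega M.I)) = act1 M.J (M.Lam M.I (M.d2 (M.omega M.K))) ∧
     act1 M.I (M.codiff2 (M.omega M.I)) = -act1 M.I (M.Lam M.J (M.d2 (M.omega M.K)))) ∧
    -- `Iλ_I = Jλ_J = Kλ_K = (1/2n) t`
    (act1 M.I M.lambdaI = act1 M.J M.lambdaJ ∧
     act1 M.J M.lambdaJ = act1 M.K M.lambdaK ∧
     act1 M.I M.lambdaI = (1/(2*(n:ℝ))) • act1 M.I (M.codiff2 (M.omega M.I))) ∧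
    -- `θ^ξ = θ^ξ_I = θ^ξ_J = θ^ξ_K`
    (M.thetaXi = M.thetaXiI ∧ M.thetaXi = M.thetaXiJ ∧ M.thetaXi = M.thetaXiK) ∧
    -- `ν^I_4 = ν^J_4 = ν^K_4 = 2t`
    (M.nu4I = M.nu4J ∧ M.nu4J = M.nu4K ∧
     M.nu4I = (2:ℝ) • act1 M.I (M.codiff2 (M.omega M.I))) ∧
    -- for `n > 1`: `ν^I_3 = ν^J_3 = ν^K_3 = 32 θ^ξ = (4/(2n+1)) t`
    (1 < n →
      (M.nu3I = M.nu3J ∧ M.nu3J = M.nu3K ∧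
       M.nu3I = (32:ℝ) • M.thetaXi ∧
       M.nu3I = (4/(2*(n:ℝ)+1)) • act1 M.I (M.codiff2 (M.omega M.I)))) := by
  obtain ⟨T, h⟩ := hHKT.exists_isHKTTorsion
  have hJ := h.rotate
  have hK := hJ.rotate
  have hlambdaI := h.act1_lambdaI
  have hlambdaJ := hJ.act1_lambdaI.trans (congrArg _ h.leeForm_J)
  have hlambdaK := hK.act1_lambdaI.trans (congrArg _ h.leeForm_K)
  have hnu4J := hJ.nu4I_eq.trans (congrArg _ h.leeForm_J)
  have hnu4K := hK.nu4I_eq.trans (congrArg _ h.leeForm_K)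
  rw [h.bismutI.act1_codiff2_omega, h.bismutJ.act1_codiff2_omega, h.bismutK.act1_codiff2_omega]
  refine ⟨⟨h.leeForm_J.symm, h.leeForm_J.trans h.leeForm_K.symm⟩,
    ⟨h.bismutI.neg_Lam_d2_omega.symm, h.act1_K_Lam_J.symm, h.act1_J_Lam_K.symm⟩,
    ⟨h.leeForm_J.symm.trans h.bismutJ.neg_Lam_d2_omega.symm,
      h.leeForm_J.symm.trans hJ.act1_K_Lam_J.symm, h.leeForm_J.symm.trans hJ.act1_J_Lam_K.symm⟩,
    ⟨h.leeForm_K.symm.trans h.bismutK.neg_Lam_d2_omega.symm,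
      h.leeForm_K.symm.trans hK.act1_K_Lam_J.symm, h.leeForm_K.symm.trans hK.act1_J_Lam_K.symm⟩,
    ⟨hlambdaI.trans hlambdaJ.symm, hlambdaJ.trans hlambdaK.symm, hlambdaI⟩,
    ⟨h.thetaXi_eq_thetaXiI, h.thetaXi_eq_thetaXiJ, h.thetaXi_eq_thetaXiK⟩,
    ⟨h.nu4I_eq.trans hnu4J.symm, hnu4J.trans hnu4K.symm, h.nu4I_eq⟩, fun hn => ?_⟩
  have hnu3J := (hJ.nu3I_eq hn).trans (congrArg _ h.leeForm_J)
  have hnu3K := (hK.nu3I_eq hn).trans (congrArg _ h.leeForm_K)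
  exact ⟨(h.nu3I_eq hn).trans hnu3J.symm, hnu3J.trans hnu3K.symm, h.nu3I_eq_smul_thetaXi hn,
    h.nu3I_eq hn⟩
end
end

section
/- The intrinsic torsion ξ of an almost quaternion-Hermitian 4n-manifold (n > 1) lies in (K+E)H precisely when there is a three-form ψ ∈ (K+E)H ⊂ Λ³T*M with ⟨Y, ξ_X Z⟩ = (3ψ + Σ_{A=I,J,K}(−A_{(23)}ψ + (2/n) Aθ^ψ ⊗ ω_A))(X,Y,Z), where θ^ψ = IΛ_Iψ = JΛ_Jψ = KΛ_Kψ. Moreover, for a given intrinsic torsion ξ ∈ (K+E)H the three-form ψ is unique and is given by 48(n−1)ψ = (n−1) d*Ω + (1/2) Σ_{A=I,J,K} Aθ^{d*Ω} ∧ ω_A, where θ^{d*Ω} = (1/3) Σ_{A=I,J,K} AΛ_A d*Ω. -/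
/-!  Synthetic (Koszul-style) model of an almost quaternion-Hermitian `4n`-manifold.

`C` plays the role of the commutative ℝ-algebra of smooth functions and `V` that of
the `C`-module of vector fields, equipped with a directional derivative `D`, a Lie
bracket, a Riemannian metric `g` together with its Levi-Civita connection `nab`
(characterised by being torsion-free and metric), a local adapted basis `I, J, K`
of anticommuting almost complex structures with `K = I J`, each compatible with the
metric, and a (local) orthonormal frame.  -/

noncomputable section

open scoped BigOperators

namespace AQH

variable {n : ℕ} {C V : Type*} [CommRing C] [Algebra ℝ C] [AddCommGroup V] [Module C V]
  [Module ℝ V] [IsScalarTower ℝ C V]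

variable (M : AQH n C V)

/-- The intrinsic torsion is given by the three-form `ψ ∈ (K+E)H ⊂ Λ³T*M` via
`⟨Y, ξ_X Z⟩ = (3ψ + Σ_A (-A_(23)ψ + (2/n) Aθ^ψ ⊗ ω_A))(X,Y,Z)`
with `θ^ψ = IΛ_Iψ = JΛ_Jψ = KΛ_Kψ`. -/
def KEHparam (ψ : V → V → V → C) : Prop :=
  -- `ψ` is a three-form in `(K+E)H`, i.e. of type `{2,1}` for each of `I, J, K`
  IsAlt3 ψ ∧ Lin3 ψ ∧
  calL M.I ψ = ψ ∧ calL M.J ψ = ψ ∧ calL M.K ψ = ψ ∧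
  -- `θ^ψ = IΛ_Iψ = JΛ_Jψ = KΛ_Kψ`
  act1 M.I (M.Lam M.I ψ) = act1 M.J (M.Lam M.J ψ) ∧
  act1 M.J (M.Lam M.J ψ) = act1 M.K (M.Lam M.K ψ) ∧
  -- the parametrization of the intrinsic torsion by `ψ`
  ∀ X Y Z, M.g Y (M.xi X Z) =
    (3:ℝ) • ψ X Y Z
      - (op23 M.I ψ X Y Z + op23 M.J ψ X Y Z + op23 M.K ψ X Y Z)
      + (2/(n:ℝ)) • (act1 M.I (act1 M.I (M.Lam M.I ψ)) X * M.omega M.I Y Z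
          + act1 M.J (act1 M.I (M.Lam M.I ψ)) X * M.omega M.J Y Z
          + act1 M.K (act1 M.I (M.Lam M.I ψ)) X * M.omega M.K Y Z)

end AQH

/-!
Let `T(X, Y, Z) = ⟨Y, ∇_X Z⟩`. Letting the endomorphisms `T_X` act on `Ω` gives
`∇Ω = -2 · T(Ω)`. The tensor `T + Σ_A A_(23) T` commutes with `I, J, K` and a combination
`Σ_A μ_A ⊗ ω_A` takes values in `𝔰𝔭(1)`, so both annihilate `Ω`. As `-4 ξ` is
`3T - Σ_A A_(23) T` modulo `Σ_A μ_A ⊗ ω_A`, it acts on `Ω` as `4T`, whence `∇Ω = 2 · ξ(Ω)`.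
If `ξ` is given by `ψ`, then likewise `ξ(Ω) = 4 · ψ(Ω)`, so that `∇Ω = 8 · ψ(Ω)`. Contracting
this and using `𝓛_A ψ = ψ` yields `d*Ω = 48 ψ + 16 Σ_A Aθ^ψ ∧ ω_A`; applying `AΛ_A` gives
`θ^{d*Ω} = -32 (n - 1) θ^ψ`, so `ψ` can be recovered from `d*Ω`.

For the existence of `ψ`, the three-form `Σ_A Aθ ∧ ω_A` has `θ^ψ = -(2n + 1) θ`, and its image
under `3 - Σ_A A_(23)` is the `EH`-tensor of `θ` plus `(4 + 2/n) Σ_A Aθ ⊗ ω_A`. The term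
`(2/n) Σ_A Aθ^ψ ⊗ ω_A` cancels this surplus, so the `KH + EH` decomposition of `ξ` corresponds to
the decomposition `ψ = ψ^{(K)} + Σ_A Aθ ∧ ω_A`.
-/

namespace AQH

section Tensors

variable {C V : Type*} [CommRing C]

theorem IsAlt3.eq_zero_of_eq [Algebra ℝ C] {ψ : V → V → V → C} (ha : IsAlt3 ψ) (X Z : V) :
    ψ X X Z = 0 := by
  have : IsAddTorsionFree C := .of_isTorsionFree ℝ C
  exact self_eq_neg.1 (ha.1 X X Z)

/-- The derivation action of `A` on the last two arguments of a `(0,3)`-tensor `T`, that is, the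
action of `A ∈ 𝔤𝔩(V)` on the bilinear forms `T_X`. -/
def der23 (A : V → V) (T : V → V → V → C) : V → V → V → C := op2 A T + op3 A T

theorem isLinearMap_act1 [Algebra ℝ C] (A : V → V) :
    IsLinearMap ℝ (act1 A : (V → C) → V → C) :=
  ⟨fun _ _ => funext fun _ => neg_add _ _, fun r _ => funext fun _ => (smul_neg r _).symm⟩

theorem IsAlt3.alternate_der23 [Algebra ℝ C] (A : V → V) {ψ : V → V → V → C} (ha : IsAlt3 ψ)
    (X Y Z : V) :
    der23 A ψ (A X) Y Z - der23 A ψ (A Y) X Z + der23 A ψ (A Z) X Y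
      = (-2 : ℝ) • calL A ψ X Y Z := by
  simp only [der23, op2, op3, calL, op12, op13, op23, Pi.add_apply, ha.1 (A X) (A Y), ha.1 X (A Y),
    ha.1 (A X) (A Z), ha.2 (A X) Y, ha.1 X (A Z), ha.2 X (A Y)]
  module

variable [AddCommGroup V] [Module C V]

theorem lin1_iff_isLinearMap {ν : V → C} : Lin1 ν ↔ IsLinearMap C ν := by
  refine ⟨fun h => ?_, fun h f X X' => by rw [h.map_add, h.map_smul, smul_eq_mul]⟩
  have map_add (X Y : V) : ν (X + Y) = ν X + ν Y := by simpa using h 1 X Y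
  have map_zero : ν 0 = 0 := by simpa using map_add 0 0
  exact ⟨map_add, fun f X => by simpa [map_zero] using h f X 0⟩

theorem lin3_iff_isLinearMap {T : V → V → V → C} :
    Lin3 T ↔ ∀ Y Z, IsLinearMap C (fun X => T X Y Z) := by
  simp only [← lin1_iff_isLinearMap]
  exact ⟨fun h Y Z f X X' => h f X X' Y Z, fun h f X X' Y Z => h Y Z f X X'⟩

theorem IsAlt3.isLinearMap_middle {ψ : V → V → V → C} (ha : IsAlt3 ψ) (hl : Lin3 ψ) (X Z : V) :
    IsLinearMap C (fun Y => ψ X Y Z) := by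
  simp only [ha.1 _ X Z]
  exact (-(lin3_iff_isLinearMap.1 hl X Z).mk').isLinear

theorem IsAlt3.isLinearMap_right {ψ : V → V → V → C} (ha : IsAlt3 ψ) (hl : Lin3 ψ) (X Y : V) :
    IsLinearMap C (ψ X Y) := by
  have swap : ψ X Y = fun Z => -ψ X Z Y := funext fun Z => ha.2 X Z Y
  rw [swap]
  exact (-(ha.isLinearMap_middle hl X Y).mk').isLinear

end Tensors

section Metric

variable {n : ℕ} {C V : Type*} [CommRing C] [Algebra ℝ C] [AddCommGroup V] [Module C V]
  (M : AQH n C V)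

theorem isLinearMap_g_left (Y : V) : IsLinearMap C (fun X => M.g X Y) :=
  ⟨fun X X' => M.g_add X X' Y, fun f X => M.g_smul f X Y⟩

theorem isLinearMap_g_right (X : V) : IsLinearMap C (M.g X) := by
  simpa only [M.g_symm _ X] using M.isLinearMap_g_left X

theorem sum_g_frame_mul {ν : V → C} (hν : IsLinearMap C ν) (X : V) :
    ∑ i, M.g X (M.frame i) * ν (M.frame i) = ν X := by
  simpa using (congrArg hν.mk' (M.frame_span X)).symm

variable {M} in
theorem ext_g {X Y : V} (h : ∀ Z, M.g X Z = M.g Y Z) : X = Y := by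
  rw [M.frame_span X, M.frame_span Y]
  simp only [h]

/-- `A` is skew-adjoint for the metric, so that `ω_A` is a two-form. Linearity is not part of the
definition, as it follows from nondegeneracy of the metric. -/
def IsSkew (A : V → V) : Prop := ∀ X Y, M.g (A X) Y = -M.g X (A Y)

variable {M}

theorem isSkew_of_isometry {A : V → V} (hsq : ∀ X, A (A X) = -X)
    (hg : ∀ X Y, M.g (A X) (A Y) = M.g X Y) : M.IsSkew A := fun X Y => by
  rw [← hg X (A Y), hsq, g_neg_right, neg_neg]

theorem IsSkew.isLinearMap {A : V → V} (hA : M.IsSkew A) : IsLinearMap C A where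
  map_add X Y := ext_g fun Z => by rw [hA, M.g_add, M.g_add, hA, hA, neg_add]
  map_smul f X := ext_g fun Z => by rw [hA, M.g_smul, M.g_smul, hA, mul_neg]

theorem IsSkew.isLinearMap_act1 {A : V → V} (hA : M.IsSkew A) {ν : V → C} (hν : IsLinearMap C ν) :
    IsLinearMap C (act1 A ν) :=
  (-(hν.mk' ∘ₗ hA.isLinearMap.mk')).isLinear

theorem IsSkew.omega_swap {A : V → V} (hA : M.IsSkew A) (X Y : V) :
    M.omega A X Y = -M.omega A Y X := by
  rw [omega, omega, ← hA, M.g_symm]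

end Metric

section AdaptedBasis

variable {n : ℕ} {C V : Type*} [CommRing C] [Algebra ℝ C] [AddCommGroup V] [Module C V]
  (M : AQH n C V)

/-- The index set `{I, J, K}` of the statements and sums over `A = I, J, K`. -/
def adaptedBasis : Set (V → V) := {M.I, M.J, M.K}

theorem I_mem : M.I ∈ M.adaptedBasis := Or.inl rfl

theorem J_mem : M.J ∈ M.adaptedBasis := Or.inr (Or.inl rfl)

theorem K_mem : M.K ∈ M.adaptedBasis := Or.inr (Or.inr rfl)

variable {M} in
theorem forall_mem_adaptedBasis {p : (V → V) → Prop} :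
    (∀ A ∈ M.adaptedBasis, p A) ↔ p M.I ∧ p M.J ∧ p M.K := by
  simp only [adaptedBasis, Set.mem_insert_iff, Set.mem_singleton_iff, forall_eq_or_imp, forall_eq]

theorem isSkew_I : M.IsSkew M.I := isSkew_of_isometry M.I_sq M.I_metric

theorem isSkew_J : M.IsSkew M.J := isSkew_of_isometry M.J_sq M.J_metric

theorem I_neg (X : V) : M.I (-X) = -M.I X := M.isSkew_I.isLinearMap.map_neg X

theorem J_neg (X : V) : M.J (-X) = -M.J X := M.isSkew_J.isLinearMap.map_neg X

theorem K_sq (X : V) : M.K (M.K X) = -X := by rw [M.K_def, M.J_K, M.I_sq]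

theorem isSkew_K : M.IsSkew M.K :=
  isSkew_of_isometry M.K_sq fun X Y => by rw [M.K_def, M.K_def, M.I_metric, M.J_metric]

theorem K_neg (X : V) : M.K (-X) = -M.K X := M.isSkew_K.isLinearMap.map_neg X

variable {M}

theorem isSkew_of_mem_adaptedBasis {A : V → V} (hA : A ∈ M.adaptedBasis) : M.IsSkew A := by
  rcases hA with rfl | rfl | rfl
  exacts [M.isSkew_I, M.isSkew_J, M.isSkew_K]

theorem sq_of_mem_adaptedBasis {A : V → V} (hA : A ∈ M.adaptedBasis) (X : V) :
    A (A X) = -X := by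
  rcases hA with rfl | rfl | rfl
  exacts [M.I_sq X, M.J_sq X, M.K_sq X]

theorem act1_act1 {A : V → V} (hA : A ∈ M.adaptedBasis) {ν : V → C} (hν : Function.Odd ν) :
    act1 A (act1 A ν) = -ν := by
  ext X
  simp only [act1, sq_of_mem_adaptedBasis hA, hν X, neg_neg, Pi.neg_apply]

end AdaptedBasis

section FundamentalForm

variable {n : ℕ} {C V : Type*} [CommRing C] [Algebra ℝ C] [AddCommGroup V] [Module C V]
  (M : AQH n C V)

/-- The action on `Ω` of a one-form `T` with values in bilinear forms. -/
def varOmega : (V → V → V → C) →ₗ[C] V → V → V → V → V → C where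
  toFun T X := wedge22 (der23 M.I T X) (M.omega M.I) + wedge22 (der23 M.J T X) (M.omega M.J)
    + wedge22 (der23 M.K T X) (M.omega M.K)
  map_add' S T := by
    ext
    simp only [der23, op2, op3, wedge22, Pi.add_apply]
    ring
  map_smul' f T := by
    ext
    simp only [der23, op2, op3, wedge22, Pi.add_apply, Pi.smul_apply, smul_eq_mul,
      RingHom.id_apply]
    ring

/-- The `(0,3)`-tensor `Σ_A μ_A ⊗ ω_A` of a one-form with values in `𝔰𝔭(1) = ⟨I, J, K⟩`. -/
def sp1Tensor (μI μJ μK : V → C) : V → V → V → C := fun X Y Z =>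
  μI X * M.omega M.I Y Z + μJ X * M.omega M.J Y Z + μK X * M.omega M.K Y Z

variable {M}

theorem varOmega_congr {S T : V → V → V → C} (h : ∀ A ∈ M.adaptedBasis, der23 A S = der23 A T) :
    M.varOmega S = M.varOmega T := by
  simp only [varOmega, LinearMap.coe_mk, AddHom.coe_mk, h M.I M.I_mem, h M.J M.J_mem, h M.K M.K_mem]

/- The difference `xiKH3 T - 4 T = -(T + Σ_B op23 B T)` is `-4` times the average of `T` over the
quaternion group `{±1, ±I, ±J, ±K}`. Since `A² = -1`, invariance under `A` is annihilation by the
derivation `A`. -/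
theorem der23_xiKH3 {A : V → V} (hA : A ∈ M.adaptedBasis) {T : V → V → V → C}
    (hY : ∀ X, Function.Odd (T X)) (hZ : ∀ X Y, Function.Odd (T X Y)) :
    der23 A (M.xiKH3 T) = der23 A ((4 : ℝ) • T) := by
  ext X Y Z
  rcases hA with rfl | rfl | rfl <;>
    simp only [der23, op2, op3, op23, xiKH3, Pi.add_apply, Pi.smul_apply, Pi.neg_apply, I_sq, J_sq,
      K_sq, ← K_def, I_K, J_I, J_K, K_I, K_J, hY X _, hZ X _ _] <;>
    module

theorem varOmega_xiKH3 {T : V → V → V → C} (hY : ∀ X, Function.Odd (T X))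
    (hZ : ∀ X Y, Function.Odd (T X Y)) : M.varOmega (M.xiKH3 T) = (4 : ℝ) • M.varOmega T := by
  rw [varOmega_congr fun A hA => der23_xiKH3 hA hY hZ, LinearMap.map_smul_of_tower]

theorem varOmega_sp1Tensor (μI μJ μK : V → C) : M.varOmega (M.sp1Tensor μI μJ μK) = 0 := by
  ext X Y Z W U
  simp only [varOmega, LinearMap.coe_mk, AddHom.coe_mk, der23, op2, op3, sp1Tensor, omega, wedge22,
    Pi.add_apply, M.isSkew_I _ _, M.isSkew_J _ _, M.isSkew_K _ _, I_sq, J_sq, K_sq, ← K_def, I_K,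
    J_I, J_K, K_I, K_J, g_neg_right, Pi.zero_apply]
  ring

end FundamentalForm

section LeviCivita

variable {n : ℕ} {C V : Type*} [CommRing C] [Algebra ℝ C] [AddCommGroup V] [Module C V]
  (M : AQH n C V)

/-- The Levi-Civita connection with an index lowered, `(X, Y, Z) ↦ ⟨Y, ∇_X Z⟩`, which is not
tensorial in `Z`. -/
def conn3 : V → V → V → C := fun X Y Z => M.g Y (M.nab X Z)

theorem odd_conn3_middle (X : V) : Function.Odd (M.conn3 X) := fun _ =>
  funext fun _ => M.g_neg_left _ _

theorem odd_conn3_right (X Y : V) : Function.Odd (M.conn3 X Y) := fun Z => by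
  have nab_neg : M.nab X (-Z) = -M.nab X Z := map_neg (AddMonoidHom.mk' _ (M.nab_add X)) Z
  rw [conn3, nab_neg, g_neg_right, conn3]

theorem D_sub (X : V) (f h : C) : M.D X (f - h) = M.D X f - M.D X h :=
  map_sub (AddMonoidHom.mk' _ (M.D_add X)) f h

theorem nab4_wedge22 (α β : V → V → C) (X : V) :
    M.nab4 (wedge22 α β) X = wedge22 (M.nab2 α X) β + wedge22 α (M.nab2 β X) := by
  ext Y Z W U
  simp only [nab4, nab2, wedge22, Pi.add_apply, D_add, D_sub, D_mul]
  ring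

theorem nab4_add (φ φ' : V → V → V → V → C) : M.nab4 (φ + φ') = M.nab4 φ + M.nab4 φ' := by
  ext
  simp only [nab4, Pi.add_apply, D_add]
  ring

variable {M}

theorem IsSkew.nab2_omega {A : V → V} (hA : M.IsSkew A) :
    M.nab2 (M.omega A) = -der23 A M.conn3 := by
  ext X Y Z
  simp only [nab2, omega, nab_metric, der23, op2, op3, conn3, Pi.neg_apply, Pi.add_apply, hA Y _]
  ring

theorem nab4_Omega4 : M.nab4 M.Omega4 = (-2 : ℝ) • M.varOmega M.conn3 := by
  have hΩ : M.Omega4 = wedge22 (M.omega M.I) (M.omega M.I) + wedge22 (M.omega M.J) (M.omega M.J)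
    + wedge22 (M.omega M.K) (M.omega M.K) := rfl
  ext X Y Z W U
  simp only [hΩ, nab4_add, nab4_wedge22, M.isSkew_I.nab2_omega, M.isSkew_J.nab2_omega,
    M.isSkew_K.nab2_omega, wedge22, varOmega, LinearMap.coe_mk, AddHom.coe_mk, Pi.add_apply,
    Pi.neg_apply, Pi.smul_apply]
  algebra

end LeviCivita

section IntrinsicTorsion

variable {n : ℕ} {C V : Type*} [CommRing C] [Algebra ℝ C] [AddCommGroup V] [Module C V]
  [Module ℝ V] [IsScalarTower ℝ C V] (M : AQH n C V)

/-- The intrinsic torsion as a `(0,3)`-tensor, `(X, Y, Z) ↦ ⟨Y, ξ_X Z⟩`. -/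
def xi3 : V → V → V → C := fun X Y Z => M.g Y (M.xi X Z)

theorem xi3_eq : M.xi3 = (-(1 / 4) : ℝ) • M.xiKH3 M.conn3
    + (1 / 2 : ℝ) • M.sp1Tensor M.lambdaI M.lambdaJ M.lambdaK := by
  have g_add_right (X Y Z : V) : M.g X (Y + Z) = M.g X Y + M.g X Z :=
    (M.isLinearMap_g_right X).map_add Y Z
  have g_smul_right (X : V) (f : C) (Y : V) : M.g X (f • Y) = f * M.g X Y :=
    (M.isLinearMap_g_right X).map_smul f Y
  have g_real_smul_right (X : V) (r : ℝ) (Y : V) : M.g X (r • Y) = r • M.g X Y :=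
    (M.isLinearMap_g_right X).mk'.map_smul_of_tower r Y
  have g_nabA {A : V → V} (hA : A ∈ M.adaptedBasis) (X Y Z : V) :
      M.g Y (A (M.nabA A X Z)) = M.conn3 X Y Z - op23 A M.conn3 X Y Z := by
    have hs := isSkew_of_mem_adaptedBasis hA
    rw [nabA, hs.isLinearMap.map_sub, sq_of_mem_adaptedBasis hA, sub_neg_eq_add, g_add_right,
      add_comm, ← sub_neg_eq_add, ← hs]
    rfl
  ext X Y Z
  simp only [xi3, xi, g_add_right, g_real_smul_right, g_smul_right, g_nabA M.I_mem, g_nabA M.J_mem,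
    g_nabA M.K_mem, xiKH3, sp1Tensor, omega, Pi.add_apply, Pi.smul_apply]
  module

theorem nab4_Omega4_eq_varOmega_xi3 : M.nab4 M.Omega4 = (2 : ℝ) • M.varOmega M.xi3 := by
  rw [nab4_Omega4, xi3_eq, map_add, LinearMap.map_smul_of_tower, LinearMap.map_smul_of_tower,
    varOmega_sp1Tensor, varOmega_xiKH3 M.odd_conn3_middle M.odd_conn3_right]
  module

end IntrinsicTorsion

section Contraction

variable {n : ℕ} {C V : Type*} [CommRing C] [Algebra ℝ C] [AddCommGroup V] [Module C V]
  {M : AQH n C V}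

theorem Lam_eq_sum (A : V → V) {β : V → V → V → C} {X : V}
    (hβ : ∀ Z, IsLinearMap C (fun Y => β X Y Z)) :
    M.Lam A β X = (1 / 2 : ℝ) • ∑ i, β X (A (M.frame i)) (M.frame i) := by
  rw [Lam, Finset.sum_comm]
  congr! with j
  simpa only [mul_comm, omega, M.g_symm] using M.sum_g_frame_mul (hβ (M.frame j)) (A (M.frame j))

theorem isLinearMap_Lam (A : V → V) : IsLinearMap ℝ (M.Lam A) where
  map_add β β' := by
    ext X
    simp only [Lam, Pi.add_apply, add_mul, Finset.sum_add_distrib, smul_add]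
  map_smul r β := by
    ext X
    simp only [Lam, Pi.smul_apply, smul_mul_assoc, ← Finset.smul_sum, smul_comm r]

theorem isLinearMap_Lam_apply (A : V → V) {β : V → V → V → C} (hβ : Lin3 β) :
    IsLinearMap C (M.Lam A β) := by
  refine lin1_iff_isLinearMap.1 fun f X X' => ?_
  simp only [Lam, hβ f, add_mul, Finset.sum_add_distrib, smul_add, mul_assoc, ← Finset.mul_sum,
    mul_smul_comm]

theorem sum_wedge22_omega_frame {A : V → V} {σ : V → V → V → C}
    (hσ : ∀ Y Z, IsLinearMap C (fun X => σ X Y Z)) (X Y Z : V) :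
    ∑ i, wedge22 (σ (M.frame i)) (M.omega A) (M.frame i) X Y Z
      = wedge12 (fun W => ∑ i, σ (M.frame i) (M.frame i) W) (M.omega A) X Y Z
        + (σ (A X) Y Z - σ (A Y) X Z + σ (A Z) X Y) := by
  have contract (W Y Z : V) :
      ∑ i, σ (M.frame i) Y Z * M.omega A (M.frame i) W = σ (A W) Y Z := by
    simpa only [mul_comm, omega, M.g_symm] using M.sum_g_frame_mul (hσ Y Z) (A W)
  simp only [← contract, wedge22, wedge12, Finset.sum_mul, ← Finset.sum_add_distrib,
    ← Finset.sum_sub_distrib]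
  refine Finset.sum_congr rfl fun i _ => by ring

theorem IsAlt3.sum_der23_frame (A : V → V) {ψ : V → V → V → C} (ha : IsAlt3 ψ) (hl : Lin3 ψ)
    (X : V) : ∑ i, der23 A ψ (M.frame i) (M.frame i) X = (2 : ℝ) • M.Lam A ψ X := by
  rw [Lam_eq_sum A (ha.isLinearMap_middle hl X), smul_smul, mul_one_div_cancel two_ne_zero,
    one_smul]
  refine Finset.sum_congr rfl fun i _ => ?_
  simp only [der23, op2, op3, Pi.add_apply, ha.eq_zero_of_eq, neg_zero, add_zero]
  rw [ha.2 _ X, neg_neg, ha.1 X, ha.2 X, neg_neg]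

theorem IsAlt3.sum_wedge22_der23_frame (A : V → V) {ψ : V → V → V → C} (ha : IsAlt3 ψ)
    (hl : Lin3 ψ) (X Y Z : V) :
    ∑ i, wedge22 (der23 A ψ (M.frame i)) (M.omega A) (M.frame i) X Y Z
      = (2 : ℝ) • wedge12 (M.Lam A ψ) (M.omega A) X Y Z - (2 : ℝ) • calL A ψ X Y Z := by
  have hψ := lin3_iff_isLinearMap.1 hl
  have isLinearMap_der23 (Y Z : V) : IsLinearMap C (fun X => der23 A ψ X Y Z) :=
    (-(hψ (A Y) Z).mk' + -(hψ Y (A Z)).mk').isLinear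
  rw [sum_wedge22_omega_frame isLinearMap_der23, ha.alternate_der23]
  simp only [ha.sum_der23_frame A hl, wedge12]
  algebra

end Contraction

section FormsKEH

variable {n : ℕ} {C V : Type*} [CommRing C] [Algebra ℝ C] [AddCommGroup V] [Module C V]
  (M : AQH n C V)

/-- The module `(K+E)H ⊂ Λ³T*M` of three-forms of type `{2,1}` for each of `I`, `J`, `K`. -/
def formsKEH : Submodule C (V → V → V → C) where
  carrier := {ψ | IsAlt3 ψ ∧ Lin3 ψ ∧ ∀ A ∈ M.adaptedBasis, calL A ψ = ψ}
  zero_mem' := by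
    refine ⟨⟨?_, ?_⟩, ?_, fun A _ => ?_⟩
    · simp
    · simp
    · intro; simp
    · ext; simp [calL, op12, op13, op23]
  add_mem' := by
    rintro ψ φ ⟨⟨hψ₁, hψ₂⟩, hψl, hψA⟩ ⟨⟨hφ₁, hφ₂⟩, hφl, hφA⟩
    refine ⟨⟨fun X Y Z => ?_, fun X Y Z => ?_⟩, fun f X X' Y Z => ?_, fun A hA => ?_⟩
    · simp only [Pi.add_apply, hψ₁ X, hφ₁ X, neg_add]
    · simp only [Pi.add_apply, hψ₂ X Y, hφ₂ X Y, neg_add]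
    · simp only [Pi.add_apply, hψl f, hφl f]
      ring
    · conv_rhs => rw [← hψA A hA, ← hφA A hA]
      ext
      simp only [calL, op12, op13, op23, Pi.add_apply]
      ring
  smul_mem' := by
    rintro c ψ ⟨⟨h₁, h₂⟩, hl, hA⟩
    refine ⟨⟨fun X Y Z => ?_, fun X Y Z => ?_⟩, fun f X X' Y Z => ?_, fun A hA' => ?_⟩
    · simp only [Pi.smul_apply, h₁ X, smul_neg]
    · simp only [Pi.smul_apply, h₂ X Y, smul_neg]
    · simp only [Pi.smul_apply, hl f, smul_eq_mul]
      ring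
    · conv_rhs => rw [← hA A hA']
      ext
      simp only [calL, op12, op13, op23, Pi.smul_apply, smul_eq_mul]
      ring

/-- The map `θ ↦ Σ_A Aθ ∧ ω_A` whose image is the module `EH` of three-forms. -/
def psiEH : (V → C) →ₗ[C] V → V → V → C where
  toFun θ := wedge12 (act1 M.I θ) (M.omega M.I) + wedge12 (act1 M.J θ) (M.omega M.J)
    + wedge12 (act1 M.K θ) (M.omega M.K)
  map_add' θ θ' := by
    ext
    simp only [act1, wedge12, Pi.add_apply]
    ring
  map_smul' f θ := by
    ext
    simp only [act1, wedge12, Pi.add_apply, Pi.smul_apply, smul_eq_mul, RingHom.id_apply]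
    ring

theorem psiEH_apply (θ : V → C) (X Y Z : V) :
    M.psiEH θ X Y Z = wedge12 (act1 M.I θ) (M.omega M.I) X Y Z
      + wedge12 (act1 M.J θ) (M.omega M.J) X Y Z + wedge12 (act1 M.K θ) (M.omega M.K) X Y Z :=
  rfl

/-- The one-form `θ^ψ = I Λ_I ψ` of a three-form `ψ ∈ (K+E)H`. -/
def thetaPsi (ψ : V → V → V → C) : V → C := act1 M.I (M.Lam M.I ψ)

variable {M}

theorem mem_formsKEH_iff {ψ : V → V → V → C} :
    ψ ∈ M.formsKEH ↔ IsAlt3 ψ ∧ Lin3 ψ ∧ ∀ A ∈ M.adaptedBasis, calL A ψ = ψ := Iff.rfl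

theorem Lam_eq_neg_act1 {A : V → V} (hA : A ∈ M.adaptedBasis) {ψ : V → V → V → C} (hψ : Lin3 ψ) :
    M.Lam A ψ = -act1 A (act1 A (M.Lam A ψ)) := by
  rw [act1_act1 hA (isLinearMap_Lam_apply A hψ).map_neg, neg_neg]

theorem isLinearMap_thetaPsi {ψ : V → V → V → C} (hψ : Lin3 ψ) : IsLinearMap C (M.thetaPsi ψ) :=
  M.isSkew_I.isLinearMap_act1 (isLinearMap_Lam_apply M.I hψ)

theorem psiEH_mem_formsKEH {θ : V → C} (hθ : IsLinearMap C θ) : M.psiEH θ ∈ M.formsKEH := by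
  refine ⟨⟨fun X Y Z => ?_, fun X Y Z => ?_⟩, fun f X X' Y Z => ?_, fun A hA => ?_⟩
  · simp only [psiEH_apply, wedge12, M.isSkew_I.omega_swap Y X, M.isSkew_J.omega_swap Y X,
      M.isSkew_K.omega_swap Y X]
    ring
  · simp only [psiEH_apply, wedge12, M.isSkew_I.omega_swap Z Y, M.isSkew_J.omega_swap Z Y,
      M.isSkew_K.omega_swap Z Y]
    ring
  · simp only [psiEH_apply, wedge12, act1, omega, M.I_lin, M.J_lin, M.K_lin, hθ.map_add,
      hθ.map_smul, M.g_add, M.g_smul, smul_eq_mul]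
    ring
  · ext X Y Z
    rcases hA with rfl | rfl | rfl <;>
      simp only [psiEH_apply, wedge12, calL, op12, op13, op23, act1, omega, M.isSkew_I _ _,
        M.isSkew_J _ _, M.isSkew_K _ _, I_sq, J_sq, K_sq, ← K_def, I_K, J_I, J_K, K_I, K_J, I_neg,
        J_neg, K_neg, g_neg_right, hθ.map_neg] <;>
      ring

theorem Lam_wedge12_omega {A B : V → V} (hA : M.IsSkew A) (hB : M.IsSkew B) {ν : V → C}
    (hν : IsLinearMap C ν) (X : V) :
    M.Lam A (wedge12 ν (M.omega B)) X
      = (1 / 2 : ℝ) • ((∑ i, M.g (A (M.frame i)) (B (M.frame i))) * ν X) + ν (A (B X)) := by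
  have isLinearMap_middle (Z : V) : IsLinearMap C (fun Y => wedge12 ν (M.omega B) X Y Z) := by
    refine ⟨fun Y Y' => ?_, fun f Y => ?_⟩
    · simp only [wedge12, omega, hν.map_add, hB.isLinearMap.map_add, M.g_add,
        (M.isLinearMap_g_right X).map_add]
      ring
    · simp only [wedge12, omega, hν.map_smul, hB.isLinearMap.map_smul, M.g_smul,
        (M.isLinearMap_g_right X).map_smul, smul_eq_mul]
      ring
  have summand (Y : V) : wedge12 ν (M.omega B) X (A Y) Y =
      M.g (A Y) (B Y) * ν X + M.g (B X) Y * ν (A Y) + M.g (A (B X)) Y * ν Y := by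
    simp only [wedge12, omega, hA (B X), hB X]
    ring
  have sum_ν_A := M.sum_g_frame_mul (hν.mk' ∘ₗ hA.isLinearMap.mk').isLinear (B X)
  simp only [LinearMap.comp_apply, IsLinearMap.mk'_apply] at sum_ν_A
  rw [Lam_eq_sum A isLinearMap_middle]
  simp only [summand, Finset.sum_add_distrib, sum_ν_A, M.sum_g_frame_mul hν, Finset.sum_mul]
  module

theorem Lam_wedge12_omega_self {A : V → V} (hA : M.IsSkew A) (hsq : ∀ X, A (A X) = -X)
    {ν : V → C} (hν : IsLinearMap C ν) :
    M.Lam A (wedge12 ν (M.omega A)) = (2 * n - 1 : ℝ) • ν := by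
  have isometry (X : V) : M.g (A X) (A X) = M.g X X := by rw [hA, hsq, g_neg_right, neg_neg]
  ext X
  rw [Lam_wedge12_omega hA hA hν, hsq, hν.map_neg]
  simp only [isometry, M.frame_orthonormal, if_true, Finset.sum_const, Finset.card_univ,
    Fintype.card_fin, Pi.smul_apply, nsmul_eq_mul, Nat.cast_mul, Nat.cast_ofNat, mul_one]
  algebra

theorem Lam_wedge12_omega_of_anticomm {A B : V → V} (hA : M.IsSkew A) (hB : M.IsSkew B)
    (hAB : ∀ X, A (B X) = -B (A X)) {ν : V → C} (hν : IsLinearMap C ν) :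
    M.Lam A (wedge12 ν (M.omega B)) = fun X => ν (A (B X)) := by
  have : IsAddTorsionFree C := .of_isTorsionFree ℝ C
  have orthogonal (X : V) : M.g (A X) (B X) = 0 := self_eq_neg.1 <| calc
    M.g (A X) (B X) = -M.g X (A (B X)) := hA X (B X)
    _ = M.g X (B (A X)) := by rw [hAB, g_neg_right, neg_neg]
    _ = -M.g (A X) (B X) := by rw [M.g_symm (A X), hB, neg_neg]
  ext X
  simp only [Lam_wedge12_omega hA hB hν, orthogonal, Finset.sum_const_zero, zero_mul, smul_zero,
    zero_add]

theorem Lam_psiEH {A : V → V} (hA : A ∈ M.adaptedBasis) {θ : V → C} (hθ : IsLinearMap C θ) :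
    M.Lam A (M.psiEH θ) = (2 * n + 1 : ℝ) • act1 A θ := by
  have hI := M.isSkew_I.isLinearMap_act1 hθ
  have hJ := M.isSkew_J.isLinearMap_act1 hθ
  have hK := M.isSkew_K.isLinearMap_act1 hθ
  ext X
  change M.Lam A (_ + _ + _) X = _
  rw [(isLinearMap_Lam A).map_add, (isLinearMap_Lam A).map_add]
  rcases hA with rfl | rfl | rfl <;>
    simp only [Lam_wedge12_omega_self, Lam_wedge12_omega_of_anticomm, isSkew_I, isSkew_J, isSkew_K,
      hI, hJ, hK, act1, Pi.add_apply, Pi.smul_apply, I_sq, J_sq, K_sq, ← K_def, I_K, J_I, J_K, K_I,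
      K_J, I_neg, J_neg, K_neg, neg_neg, implies_true] <;>
    module

end FormsKEH

section EH

variable {n : ℕ} {C V : Type*} [CommRing C] [Algebra ℝ C] [AddCommGroup V] [Module C V]
  (M : AQH n C V)

theorem xiKH3_add (ψ φ : V → V → V → C) : M.xiKH3 (ψ + φ) = M.xiKH3 ψ + M.xiKH3 φ := by
  ext
  simp only [xiKH3, op23, Pi.add_apply]
  module

/-- The map `θ ↦ Σ_A Aθ ⊗ ω_A`. -/
def tensorEH : (V → C) →ₗ[C] V → V → V → C where
  toFun θ := M.sp1Tensor (act1 M.I θ) (act1 M.J θ) (act1 M.K θ)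
  map_add' θ θ' := by
    ext
    simp only [act1, sp1Tensor, Pi.add_apply]
    ring
  map_smul' f θ := by
    ext
    simp only [act1, sp1Tensor, Pi.smul_apply, smul_eq_mul, RingHom.id_apply]
    ring

theorem tensorEH_apply (θ : V → C) :
    M.tensorEH θ = M.sp1Tensor (act1 M.I θ) (act1 M.J θ) (act1 M.K θ) := rfl

theorem xiEH3_eq (θ : V → C) (X Y Z : V) :
    M.xiEH3 θ X Y Z = (3 : ℝ) • (M.g X Y * θ Z - M.g X Z * θ Y)
      + (wedge11 (M.omega M.I X) (act1 M.I θ) Y Z + wedge11 (M.omega M.J X) (act1 M.J θ) Y Z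
        + wedge11 (M.omega M.K X) (act1 M.K θ) Y Z)
      - (2 / n : ℝ) • M.tensorEH θ X Y Z := by
  have contract {A : V → V} (hA : IsLinearMap C A) (a b : C) :
      ∑ i, M.g (M.frame i) X * (M.g (A (M.frame i)) Y * a - M.g (A (M.frame i)) Z * b)
        = M.g (A X) Y * a - M.g (A X) Z * b := by
    have hν : IsLinearMap C (fun W => M.g (A W) Y * a - M.g (A W) Z * b) := by
      refine ⟨fun W W' => ?_, fun f W => ?_⟩
      · simp only [hA.map_add, M.g_add]
        ring
      · simp only [hA.map_smul, M.g_smul, smul_eq_mul]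
        ring
    simpa only [M.g_symm X] using M.sum_g_frame_mul hν X
  rw [xiEH3, contract M.isSkew_I.isLinearMap, contract M.isSkew_J.isLinearMap,
    contract M.isSkew_K.isLinearMap, contract (A := fun W => W) LinearMap.id.isLinear]
  simp only [M.isSkew_I _ _, M.isSkew_J _ _, M.isSkew_K _ _, wedge11, omega,
    tensorEH_apply, sp1Tensor]
  algebra

theorem xiKH3_psiEH {θ : V → C} (hθ : Function.Odd θ) : M.xiKH3 (M.psiEH θ) =
    M.xiEH3 θ + (4 + 2 / n : ℝ) • M.tensorEH θ := by
  ext X Y Z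
  simp only [Pi.add_apply, Pi.smul_apply, xiEH3_eq, xiKH3, psiEH_apply, wedge11, wedge12, op23,
    act1, omega, tensorEH_apply, sp1Tensor, M.isSkew_I _ _, M.isSkew_J _ _, M.isSkew_K _ _, I_sq,
    J_sq, K_sq, ← K_def, I_K, J_I, J_K, K_I, K_J, I_neg, J_neg, K_neg, g_neg_right, hθ _]
  algebra

/-- The tensor `3ψ + Σ_A (-A_(23)ψ + (2/n) Aθ^ψ ⊗ ω_A)` of a three-form `ψ ∈ (K+E)H`. -/
def xiKEH3 (ψ : V → V → V → C) : V → V → V → C :=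
  M.xiKH3 ψ + (2 / n : ℝ) • M.tensorEH (M.thetaPsi ψ)

theorem xiKEH3_add_psiEH (hn : n ≠ 0) {ψ : V → V → V → C} {θ : V → C} (hθ : Function.Odd θ)
    (h : M.thetaPsi (ψ + M.psiEH θ) = (-(2 * n + 1) : ℝ) • θ) :
    M.xiKEH3 (ψ + M.psiEH θ) = M.xiKH3 ψ + M.xiEH3 θ := by
  have cancel : (4 + 2 / n : ℝ) + 2 / n * -(2 * n + 1) = 0 := by
    field_simp
    ring
  rw [xiKEH3, h, LinearMap.map_smul_of_tower, xiKH3_add, xiKH3_psiEH M hθ, smul_smul, ← add_assoc,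
    add_assoc, ← add_smul, cancel, zero_smul, add_zero]

variable {M}

theorem act1_Lam_psiEH {A : V → V} (hA : A ∈ M.adaptedBasis) {θ : V → C} (hθ : IsLinearMap C θ) :
    act1 A (M.Lam A (M.psiEH θ)) = (-(2 * n + 1) : ℝ) • θ := by
  rw [Lam_psiEH hA hθ, (isLinearMap_act1 A).map_smul, act1_act1 hA hθ.map_neg, smul_neg, neg_smul]

theorem InKH3_iff {ψ : V → V → V → C} :
    M.InKH3 ψ ↔ ψ ∈ M.formsKEH ∧ ∀ A ∈ M.adaptedBasis, M.Lam A ψ = 0 := by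
  simp only [InKH3, mem_formsKEH_iff, forall_mem_adaptedBasis, and_assoc]

end EH

section Characterisation

variable {n : ℕ} {C V : Type*} [CommRing C] [Algebra ℝ C] [AddCommGroup V] [Module C V]
  [Module ℝ V] {M : AQH n C V}

theorem inKEH_iff : M.inKEH ↔
    ∃ ψ θ, M.InKH3 ψ ∧ IsLinearMap C θ ∧ M.xi3 = M.xiKH3 ψ + M.xiEH3 θ := by
  simp only [inKEH, lin1_iff_isLinearMap, funext_iff]
  rfl

theorem KEHparam_iff {ψ : V → V → V → C} :
    M.KEHparam ψ ↔ ψ ∈ M.formsKEH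
      ∧ (∀ A ∈ M.adaptedBasis, act1 A (M.Lam A ψ) = M.thetaPsi ψ) ∧ M.xi3 = M.xiKEH3 ψ := by
  simp only [mem_formsKEH_iff, forall_mem_adaptedBasis, and_assoc]
  constructor
  · rintro ⟨ha, hl, hI, hJ, hK, hIJ, hJK, hξ⟩
    exact ⟨ha, hl, hI, hJ, hK, rfl, hIJ.symm, (hIJ.trans hJK).symm,
      funext fun X => funext fun Y => funext (hξ X Y)⟩
  · rintro ⟨ha, hl, hI, hJ, hK, -, hθJ, hθK, hξ⟩
    exact ⟨ha, hl, hI, hJ, hK, hθJ.symm, hθJ.trans hθK.symm,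
      fun X Y Z => congrFun (congrFun (congrFun hξ X) Y) Z⟩

theorem inKEH_iff_exists_KEHparam (hn : n ≠ 0) : M.inKEH ↔ ∃ ψ, M.KEHparam ψ := by
  rw [inKEH_iff]
  constructor
  · rintro ⟨ψ, θ, hψ, hθ, hξ⟩
    obtain ⟨hψ, hLam⟩ := InKH3_iff.1 hψ
    have act1_Lam {A : V → V} (hA : A ∈ M.adaptedBasis) :
        act1 A (M.Lam A (ψ + M.psiEH θ)) = (-(2 * n + 1) : ℝ) • θ := by
      rw [(isLinearMap_Lam A).map_add, hLam A hA, zero_add, act1_Lam_psiEH hA hθ]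
    refine ⟨ψ + M.psiEH θ,
      KEHparam_iff.2 ⟨add_mem hψ (psiEH_mem_formsKEH hθ), fun A hA => ?_, ?_⟩⟩
    · rw [act1_Lam hA, thetaPsi, act1_Lam M.I_mem]
    · rw [hξ, M.xiKEH3_add_psiEH hn hθ.map_neg (act1_Lam M.I_mem)]
  · rintro ⟨ψ, hψ⟩
    obtain ⟨hψ, hθψ, hξ⟩ := KEHparam_iff.1 hψ
    obtain ⟨θ, hθ, hθ_eq⟩ :
        ∃ θ, IsLinearMap C θ ∧ M.thetaPsi ψ = (-(2 * n + 1) : ℝ) • θ :=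
      ⟨(-(2 * n + 1) : ℝ)⁻¹ • M.thetaPsi ψ,
        ((-(2 * n + 1) : ℝ)⁻¹ • (isLinearMap_thetaPsi (M := M) hψ.2.1).mk').isLinear,
        (smul_inv_smul₀ (neg_ne_zero.2 (by positivity)) _).symm⟩
    have sub_add : ψ - M.psiEH θ + M.psiEH θ = ψ := sub_add_cancel _ _
    refine ⟨ψ - M.psiEH θ, θ,
      InKH3_iff.2 ⟨sub_mem hψ (psiEH_mem_formsKEH hθ), fun A hA => ?_⟩, hθ, ?_⟩
    · have Lam_sub : M.Lam A (ψ - M.psiEH θ) = M.Lam A ψ - M.Lam A (M.psiEH θ) := by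
        rw [eq_sub_iff_add_eq, ← (isLinearMap_Lam A).map_add, sub_add]
      rw [Lam_sub, Lam_eq_neg_act1 hA hψ.2.1, hθψ A hA, hθ_eq,
        Lam_psiEH hA hθ, (isLinearMap_act1 A).map_smul]
      module
    · rw [← M.xiKEH3_add_psiEH hn hθ.map_neg (by rw [sub_add, hθ_eq]), sub_add, hξ]

end Characterisation

section Codifferential

variable {n : ℕ} {C V : Type*} [CommRing C] [Algebra ℝ C] [AddCommGroup V] [Module C V]
  [Module ℝ V] [IsScalarTower ℝ C V] {M : AQH n C V} {ψ : V → V → V → C}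

theorem codiff4_Omega4_of_xi3_eq (ha : IsAlt3 ψ) (hl : Lin3 ψ) {μI μJ μK : V → C}
    (h : M.xi3 = M.xiKH3 ψ + M.sp1Tensor μI μJ μK) :
    M.codiff4 M.Omega4 = (16 : ℝ) • (calL M.I ψ + calL M.J ψ + calL M.K ψ)
      - (16 : ℝ) • (wedge12 (M.Lam M.I ψ) (M.omega M.I) + wedge12 (M.Lam M.J ψ) (M.omega M.J)
        + wedge12 (M.Lam M.K ψ) (M.omega M.K)) := by
  have odd_middle (X : V) : Function.Odd (ψ X) := fun Y =>
    funext fun Z => (ha.isLinearMap_middle hl X Z).map_neg Y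
  have odd_right (X Y : V) : Function.Odd (ψ X Y) := (ha.isLinearMap_right hl X Y).map_neg
  have nab4_eq : M.nab4 M.Omega4 = (8 : ℝ) • M.varOmega ψ := by
    rw [nab4_Omega4_eq_varOmega_xi3, h, map_add, varOmega_sp1Tensor, add_zero,
      varOmega_xiKH3 odd_middle odd_right, smul_smul]
    norm_num
  ext X Y Z
  simp only [codiff4, nab4_eq, varOmega, LinearMap.coe_mk, AddHom.coe_mk, Pi.smul_apply,
    Pi.add_apply, Pi.sub_apply, ← Finset.smul_sum, Finset.sum_add_distrib,
    ha.sum_wedge22_der23_frame _ hl]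
  module

theorem KEHparam.codiff4_Omega4 (h : M.KEHparam ψ) :
    M.codiff4 M.Omega4 = (48 : ℝ) • ψ + (16 : ℝ) • M.psiEH (M.thetaPsi ψ) := by
  obtain ⟨⟨ha, hl, hcalL⟩, hθ, hξ⟩ := KEHparam_iff.1 h
  have Lam_eq {A : V → V} (hA : A ∈ M.adaptedBasis) : M.Lam A ψ = -act1 A (M.thetaPsi ψ) := by
    rw [Lam_eq_neg_act1 hA hl, hθ A hA]
  rw [xiKEH3, ← LinearMap.map_smul_of_tower] at hξ
  rw [codiff4_Omega4_of_xi3_eq ha hl hξ, hcalL _ M.I_mem, hcalL _ M.J_mem, hcalL _ M.K_mem,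
    Lam_eq M.I_mem, Lam_eq M.J_mem, Lam_eq M.K_mem]
  ext
  simp only [psiEH_apply, wedge12, Pi.add_apply, Pi.sub_apply, Pi.smul_apply, Pi.neg_apply]
  algebra

theorem KEHparam.thetaDOmega_eq (h : M.KEHparam ψ) :
    M.thetaDOmega = (-(32 * (n - 1)) : ℝ) • M.thetaPsi ψ := by
  obtain ⟨⟨-, hl, -⟩, hθ, -⟩ := KEHparam_iff.1 h
  have act1_Lam {A : V → V} (hA : A ∈ M.adaptedBasis) :
      act1 A (M.Lam A (M.codiff4 M.Omega4)) = (-(32 * (n - 1)) : ℝ) • M.thetaPsi ψ := by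
    rw [h.codiff4_Omega4, (isLinearMap_Lam A).map_add, (isLinearMap_Lam A).map_smul,
      (isLinearMap_Lam A).map_smul, (isLinearMap_act1 A).map_add, (isLinearMap_act1 A).map_smul,
      (isLinearMap_act1 A).map_smul, hθ A hA, act1_Lam_psiEH hA (isLinearMap_thetaPsi hl)]
    module
  ext X
  simp only [thetaDOmega, act1_Lam M.I_mem, act1_Lam M.J_mem, act1_Lam M.K_mem]
  module

theorem KEHparam.smul_eq_codiff4_Omega4 (h : M.KEHparam ψ) :
    (48 * (n - 1) : ℝ) • ψ
      = (n - 1 : ℝ) • M.codiff4 M.Omega4 + (1 / 2 : ℝ) • M.psiEH M.thetaDOmega := by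
  rw [h.thetaDOmega_eq, h.codiff4_Omega4, LinearMap.map_smul_of_tower]
  module

theorem KEHparam.unique (hn : 1 < n) {ψ' : V → V → V → C} (h : M.KEHparam ψ)
    (h' : M.KEHparam ψ') : ψ = ψ' := by
  have coeff_ne_zero : (48 * (n - 1) : ℝ) ≠ 0 :=
    mul_ne_zero (by norm_num) (sub_ne_zero.2 (by exact_mod_cast hn.ne'))
  exact smul_right_injective _ coeff_ne_zero <|
    h.smul_eq_codiff4_Omega4.trans h'.smul_eq_codiff4_Omega4.symm

end Codifferential

end AQH

open AQH in
/-- The intrinsic torsion `ξ` of an almost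
quaternion-Hermitian `4n`-manifold (`n > 1`) lies in `(K+E)H` precisely when it
is given by a three-form `ψ ∈ (K+E)H ⊂ Λ³T*M` via
`⟨Y, ξ_X Z⟩ = (3ψ + Σ_A (-A_(23)ψ + (2/n) Aθ^ψ ⊗ ω_A))(X,Y,Z)`,
`θ^ψ = IΛ_Iψ = JΛ_Jψ = KΛ_Kψ`.  Moreover such a `ψ` is unique and given by
`48(n-1)ψ = (n-1) d*Ω + (1/2) Σ_A Aθ^{d*Ω} ∧ ω_A`. -/
theorem statement13 {n : ℕ} {C V : Type*} [CommRing C] [Algebra ℝ C] [AddCommGroup V]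
    [Module C V] [Module ℝ V] [IsScalarTower ℝ C V]
    (hn : 1 < n) (M : AQH n C V) :
    (M.inKEH ↔ ∃ ψ : V → V → V → C, M.KEHparam ψ) ∧
    (∀ ψ ψ' : V → V → V → C, M.KEHparam ψ → M.KEHparam ψ' → ψ = ψ') ∧
    (∀ ψ : V → V → V → C, M.KEHparam ψ →
      ∀ X Y Z, (48*((n:ℝ)-1)) • ψ X Y Z
        = ((n:ℝ)-1) • M.codiff4 M.Omega4 X Y Z
          + (1/2:ℝ) • (wedge12 (act1 M.I M.thetaDOmega) (M.omega M.I) X Y Z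
              + wedge12 (act1 M.J M.thetaDOmega) (M.omega M.J) X Y Z
              + wedge12 (act1 M.K M.thetaDOmega) (M.omega M.K) X Y Z)) := by
  refine ⟨inKEH_iff_exists_KEHparam (by lia), fun ψ ψ' h h' => h.unique hn h',
    fun ψ h X Y Z => ?_⟩
  exact congrFun (congrFun (congrFun h.smul_eq_codiff4_Omega4 X) Y) Z
end
end
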